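/- arXiv:2505.08023 — 5 statements merged into one kernel-verified Lean document; each statement's English description precedes it below -/
import Mathlib

section
/- Let λ > 0 and T > 0, and let r, ℓ : [0,T) × ℝ → ℝ be of class C¹, satisfy the diagonal system ∂ₜr + k(r−ℓ)·∂ₓr = −(λ/2)(r+ℓ) and ∂ₜℓ − k(r−ℓ)·∂ₓℓ = −(λ/2)(r+ℓ) on [0,T) × ℝ, and be bounded together with their first derivatives on [0,t] × ℝ for every t < T. Then for every t ∈ [0,T): sup_{(x,y)∈ℝ²} |r(t,x) + ℓ(t,y)| ≤ sup_{(x,y)∈ℝ²} |r(0,x) + ℓ(0,y)| and sup_{(x,y)∈ℝ²} |r(t,x) − ℓ(t,y)| ≤ sup_{(x,y)∈ℝ²} |r(0,x) − ℓ(0,y)|. -/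
open Real Set Filter MeasureTheory

noncomputable section

/-- `L(u) = (1/2)(u·√(1+u²) + arcsinh u)`, the antiderivative of `Q(ξ) = √(1+ξ²)` with `L 0 = 0`. -/
def Lfun (u : ℝ) : ℝ := (1/2) * (u * Real.sqrt (1 + u^2) + Real.arsinh u)

/-- `û₁(η) = L⁻¹(−η/2)`. -/
def u1hat (η : ℝ) : ℝ := Function.invFun Lfun (-η/2)

/-- `k(η) = √(1 + û₁(η)²)`. -/
def kfun (η : ℝ) : ℝ := Real.sqrt (1 + (u1hat η)^2)

/-- `f(η) = k'(η)/√(k(η))`. -/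
def ffun (η : ℝ) : ℝ := deriv kfun η / Real.sqrt (kfun η)

/-- `A(t) = exp(λ t / 2)`. -/
def Afun (lam t : ℝ) : ℝ := Real.exp (lam * t / 2)

lemma left_max_deriv_nonneg {g : ℝ → ℝ} {g' t : ℝ} (ht : 0 < t) (hg : HasDerivAt g g' t)
    (hmax : ∀ u ∈ Set.Ioo 0 t, g u ≤ g t) : 0 ≤ g' := by
  have h := (hasDerivAt_iff_tendsto_slope.1 hg).mono_left
    (nhdsWithin_mono t (fun u (hu : u < t) => ne_of_lt hu) : nhdsWithin t (Set.Iio t) ≤ _)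
  refine ge_of_tendsto h ?_
  filter_upwards [Ioo_mem_nhdsLT ht] with u hu
  rw [slope_def_field]
  exact div_nonneg_of_nonpos (by linarith [hmax u hu]) (by linarith [hu.2])

lemma hasDerivAt_psi (x : ℝ) :
    HasDerivAt (fun x : ℝ => Real.sqrt (1 + x^2)) (x / Real.sqrt (1 + x^2)) x := by
  have h : HasDerivAt (fun x : ℝ => 1 + x^2) (2 * x) x := by
    simpa using (hasDerivAt_pow 2 x).const_add 1
  have h2 := h.sqrt (by positivity)
  convert h2 using 1
  have : Real.sqrt (1 + x^2) ≠ 0 := by positivity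
  field_simp

lemma abs_psi_le (x : ℝ) : |x / Real.sqrt (1 + x^2)| ≤ 1 := by
  have hp : 0 < Real.sqrt (1 + x^2) := by positivity
  rw [abs_div, abs_of_pos hp, div_le_one hp]
  exact Real.abs_le_sqrt (by linarith)

lemma abs_le_psi (x : ℝ) : |x| ≤ Real.sqrt (1 + x^2) :=
  Real.abs_le_sqrt (by linarith)

lemma max_principle_eps
    (lam K M s t1 S0 ε : ℝ) (hlam : 0 < lam) (hK : 0 ≤ K) (hs : |s| = 1) (hε : 0 < ε)
    (hS0 : 0 ≤ S0)
    (r m c rt rx mt mx : ℝ → ℝ → ℝ)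
    (hr : ContinuousOn (Function.uncurry r) (Set.Icc 0 t1 ×ˢ (Set.univ : Set ℝ)))
    (hm : ContinuousOn (Function.uncurry m) (Set.Icc 0 t1 ×ˢ (Set.univ : Set ℝ)))
    (hrt : ∀ t ∈ Set.Ioc 0 t1, ∀ x, HasDerivAt (fun u => r u x) (rt t x) t)
    (hrx : ∀ t ∈ Set.Ioc 0 t1, ∀ x, HasDerivAt (fun y => r t y) (rx t x) x)
    (hmt : ∀ t ∈ Set.Ioc 0 t1, ∀ x, HasDerivAt (fun u => m u x) (mt t x) t)
    (hmx : ∀ t ∈ Set.Ioc 0 t1, ∀ x, HasDerivAt (fun y => m t y) (mx t x) x)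
    (hpr : ∀ t ∈ Set.Ioc 0 t1, ∀ x, rt t x + c t x * rx t x = -(lam/2) * (r t x + s * m t x))
    (hpm : ∀ t ∈ Set.Ioc 0 t1, ∀ x, mt t x - c t x * mx t x = -(lam/2) * (s * r t x + m t x))
    (hc : ∀ t ∈ Set.Ioc 0 t1, ∀ x, |c t x| ≤ K)
    (hM : ∀ t ∈ Set.Icc 0 t1, ∀ x, |r t x| ≤ M ∧ |m t x| ≤ M)
    (h0 : ∀ x y, |r 0 x + m 0 y| ≤ S0)
    (t : ℝ) (ht : t ∈ Set.Icc 0 t1) (x y : ℝ) :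
    |r t x + m t y| ≤ S0 + ε * ((2*K+1) * t + Real.sqrt (1 + x^2) + Real.sqrt (1 + y^2)) := by
  by_contra! hcon
  set F : ℝ × ℝ × ℝ → ℝ := fun p => |r p.1 p.2.1 + m p.1 p.2.2|
    - ε * ((2*K+1) * p.1 + Real.sqrt (1 + p.2.1^2) + Real.sqrt (1 + p.2.2^2)) with hF
  have hFp : S0 < F (t, x, y) := by simp only [hF]; linarith
  set R : ℝ := 2 * M / ε + |x| + |y| with hR
  have hM0 : 0 ≤ M := (abs_nonneg _).trans (hM t ht x).1
  have hR0 : 2 * M / ε ≤ R := by have := abs_nonneg x; have := abs_nonneg y; linarith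
  have hdiv : 0 ≤ 2 * M / ε := by positivity
  set D : Set (ℝ × ℝ × ℝ) := Set.Icc 0 t1 ×ˢ (Set.Icc (-R) R ×ˢ Set.Icc (-R) R) with hD
  have hDc : IsCompact D := isCompact_Icc.prod (isCompact_Icc.prod isCompact_Icc)
  have hpD : (t, x, y) ∈ D := by
    refine ⟨ht, abs_le.1 ?_, abs_le.1 ?_⟩
    · have := abs_nonneg y; simp only; linarith
    · have := abs_nonneg x; simp only; linarith
  have hFc : ContinuousOn F D := by
    have h1 : ContinuousOn (fun p : ℝ × ℝ × ℝ => r p.1 p.2.1) D :=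
      hr.comp (f := fun p : ℝ × ℝ × ℝ => (p.1, p.2.1)) (by fun_prop) (fun p hp => ⟨hp.1, trivial⟩)
    have h2 : ContinuousOn (fun p : ℝ × ℝ × ℝ => m p.1 p.2.2) D :=
      hm.comp (f := fun p : ℝ × ℝ × ℝ => (p.1, p.2.2)) (by fun_prop) (fun p hp => ⟨hp.1, trivial⟩)
    have h3 : Continuous (fun p : ℝ × ℝ × ℝ =>
      ε * ((2*K+1) * p.1 + Real.sqrt (1 + p.2.1^2) + Real.sqrt (1 + p.2.2^2))) := by fun_prop
    exact (h1.add h2).abs.sub h3.continuousOn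
  obtain ⟨⟨τ, a, b⟩, hqD, hqmax⟩ := hDc.exists_isMaxOn ⟨_, hpD⟩ hFc
  have hqS : S0 < F (τ, a, b) := hFp.trans_le (hqmax hpD)
  have hτ : τ ∈ Set.Icc 0 t1 := hqD.1
  have hglob : ∀ u ∈ Set.Icc 0 t1, ∀ x' y', F (u, x', y') ≤ F (τ, a, b) := by
    intro u hu x' y'
    by_cases hin : |x'| ≤ R ∧ |y'| ≤ R
    · exact hqmax (show (u, x', y') ∈ D from ⟨hu, abs_le.1 hin.1, abs_le.1 hin.2⟩)
    · have hbig : R ≤ Real.sqrt (1 + x'^2) + Real.sqrt (1 + y'^2) := by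
        have h1 := abs_le_psi x'
        have h2 := abs_le_psi y'
        have h3 := abs_nonneg x'
        have h4 := abs_nonneg y'
        by_cases h : |x'| ≤ R
        · have : R < |y'| := by by_contra! h'; exact hin ⟨h, h'⟩
          linarith
        · linarith
      have h5 : |r u x' + m u y'| ≤ 2 * M := by
        have := abs_add_le (r u x') (m u y')
        linarith [(hM u hu x').1, (hM u hu y').2]
      have h6 : 2 * M ≤ ε * R := by
        have := mul_le_mul_of_nonneg_left hR0 hε.le
        rwa [mul_div_cancel₀ _ hε.ne'] at this
      have h7 : 0 ≤ (2*K+1) * u := mul_nonneg (by linarith) hu.1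
      have h8 : ε * R ≤ ε * ((2*K+1) * u + Real.sqrt (1 + x'^2) + Real.sqrt (1 + y'^2)) :=
        mul_le_mul_of_nonneg_left (by linarith) hε.le
      have : F (u, x', y') ≤ 0 := by simp only [hF]; linarith
      linarith
  have hτ0 : 0 < τ := by
    rcases hτ.1.lt_or_eq with h | h
    · exact h
    · exfalso
      subst h
      have h1 := h0 a b
      have : 0 ≤ ε * ((2*K+1) * 0 + Real.sqrt (1 + a^2) + Real.sqrt (1 + b^2)) := by positivity
      simp only [hF] at hqS
      linarith
  have hτ' : τ ∈ Set.Ioc 0 t1 := ⟨hτ0, hτ.2⟩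
  obtain ⟨σ, hσ, hσw⟩ : ∃ σ : ℝ, |σ| = 1 ∧ |r τ a + m τ b| = σ * (r τ a + m τ b) := by
    rcases abs_choice (r τ a + m τ b) with h | h
    · exact ⟨1, by simp, by rw [h]; ring⟩
    · exact ⟨-1, by simp, by rw [h]; ring⟩
  have hle : ∀ z : ℝ, σ * z ≤ |z| := fun z => by
    have := le_abs_self (σ * z)
    rwa [abs_mul, hσ, one_mul] at this
  have hG : ∀ u ∈ Set.Icc 0 t1, ∀ x' y', σ * (r u x' + m u y')
      - ε * ((2*K+1) * u + Real.sqrt (1 + x'^2) + Real.sqrt (1 + y'^2)) ≤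
      σ * (r τ a + m τ b)
      - ε * ((2*K+1) * τ + Real.sqrt (1 + a^2) + Real.sqrt (1 + b^2)) := by
    intro u hu x' y'
    have h1 := hglob u hu x' y'
    simp only [hF] at h1
    rw [hσw] at h1
    linarith [hle (r u x' + m u y')]
  have hx : σ * rx τ a = ε * (a / Real.sqrt (1 + a^2)) := by
    have hd : HasDerivAt (fun x' => σ * r τ x' - ε * Real.sqrt (1 + x'^2))
        (σ * rx τ a - ε * (a / Real.sqrt (1 + a^2))) a :=
      ((hrx τ hτ' a).const_mul σ).sub ((hasDerivAt_psi a).const_mul ε)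
    have hmx' : IsLocalMax (fun x' => σ * r τ x' - ε * Real.sqrt (1 + x'^2)) a :=
      Filter.Eventually.of_forall (fun x' => by linarith [hG τ hτ x' b])
    linarith [hmx'.hasDerivAt_eq_zero hd]
  have hy : σ * mx τ b = ε * (b / Real.sqrt (1 + b^2)) := by
    have hd : HasDerivAt (fun x' => σ * m τ x' - ε * Real.sqrt (1 + x'^2))
        (σ * mx τ b - ε * (b / Real.sqrt (1 + b^2))) b :=
      ((hmx τ hτ' b).const_mul σ).sub ((hasDerivAt_psi b).const_mul ε)
    have hmx' : IsLocalMax (fun x' => σ * m τ x' - ε * Real.sqrt (1 + x'^2)) b :=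
      Filter.Eventually.of_forall (fun x' => by linarith [hG τ hτ a x'])
    linarith [hmx'.hasDerivAt_eq_zero hd]
  have htt : 0 ≤ σ * (rt τ a + mt τ b) - ε * ((2*K+1) * 1) := by
    have hd : HasDerivAt (fun u => σ * (r u a + m u b) - ε * ((2*K+1) * u))
        (σ * (rt τ a + mt τ b) - ε * ((2*K+1) * 1)) τ :=
      (((hrt τ hτ' a).add (hmt τ hτ' b)).const_mul σ).sub
        (((hasDerivAt_id τ).const_mul (2*K+1)).const_mul ε)
    refine left_max_deriv_nonneg hτ0 hd (fun u hu => ?_)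
    linarith [hG u ⟨hu.1.le, hu.2.le.trans hτ.2⟩ a b]
  have hsym : |r τ b + m τ a| ≤ σ * (r τ a + m τ b) := by
    have h1 := hglob τ hτ b a
    simp only [hF] at h1
    rw [hσw] at h1
    linarith
  have hsym2 : -(σ * (s * (r τ b + m τ a))) ≤ |r τ b + m τ a| := by
    have := neg_abs_le (σ * (s * (r τ b + m τ a)))
    rw [abs_mul, abs_mul, hσ, hs, one_mul, one_mul] at this
    linarith
  have e1 := hpr τ hτ' a
  have e2 := hpm τ hτ' b
  have e3 : σ * (rt τ a + mt τ b) = -(c τ a) * (σ * rx τ a) + c τ b * (σ * mx τ b)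
      - lam/2 * (σ * (r τ a + m τ b) + σ * (s * (r τ b + m τ a))) := by
    linear_combination σ * e1 + σ * e2
  have e4 : 0 ≤ lam/2 * (σ * (r τ a + m τ b) + σ * (s * (r τ b + m τ a))) :=
    mul_nonneg (by linarith) (by linarith)
  have hprod : ∀ z x' : ℝ, |z| ≤ K → |z * (x' / Real.sqrt (1 + x'^2))| ≤ K := by
    intro z x' hz
    rw [abs_mul]
    calc |z| * |x' / Real.sqrt (1 + x'^2)| ≤ K * 1 :=
          mul_le_mul hz (abs_psi_le x') (abs_nonneg _) hK
      _ = K := mul_one K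
  have e5 := (abs_le.1 (hprod _ a (hc τ hτ' a))).1
  have e6 := (abs_le.1 (hprod _ b (hc τ hτ' b))).2
  rw [hx, hy] at e3
  have e7 : ε * (-(c τ a * (a / Real.sqrt (1 + a^2))) + c τ b * (b / Real.sqrt (1 + b^2)))
      ≤ ε * (2 * K) := mul_le_mul_of_nonneg_left (by linarith) hε.le
  linarith

lemma max_principle
    (lam K M s t1 S0 : ℝ) (hlam : 0 < lam) (hK : 0 ≤ K) (hs : |s| = 1)
    (r m c rt rx mt mx : ℝ → ℝ → ℝ)
    (hr : ContinuousOn (Function.uncurry r) (Set.Icc 0 t1 ×ˢ (Set.univ : Set ℝ)))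
    (hm : ContinuousOn (Function.uncurry m) (Set.Icc 0 t1 ×ˢ (Set.univ : Set ℝ)))
    (hrt : ∀ t ∈ Set.Ioc 0 t1, ∀ x, HasDerivAt (fun u => r u x) (rt t x) t)
    (hrx : ∀ t ∈ Set.Ioc 0 t1, ∀ x, HasDerivAt (fun y => r t y) (rx t x) x)
    (hmt : ∀ t ∈ Set.Ioc 0 t1, ∀ x, HasDerivAt (fun u => m u x) (mt t x) t)
    (hmx : ∀ t ∈ Set.Ioc 0 t1, ∀ x, HasDerivAt (fun y => m t y) (mx t x) x)
    (hpr : ∀ t ∈ Set.Ioc 0 t1, ∀ x, rt t x + c t x * rx t x = -(lam/2) * (r t x + s * m t x))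
    (hpm : ∀ t ∈ Set.Ioc 0 t1, ∀ x, mt t x - c t x * mx t x = -(lam/2) * (s * r t x + m t x))
    (hc : ∀ t ∈ Set.Ioc 0 t1, ∀ x, |c t x| ≤ K)
    (hM : ∀ t ∈ Set.Icc 0 t1, ∀ x, |r t x| ≤ M ∧ |m t x| ≤ M)
    (h0 : ∀ x y, |r 0 x + m 0 y| ≤ S0)
    (t : ℝ) (ht : t ∈ Set.Icc 0 t1) (x y : ℝ) :
    |r t x + m t y| ≤ S0 := by
  set P := (2*K+1) * t + Real.sqrt (1 + x^2) + Real.sqrt (1 + y^2) with hP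
  have hP0 : 0 < P := by
    have : 0 ≤ (2*K+1) * t := mul_nonneg (by linarith) ht.1
    have : 0 < Real.sqrt (1 + x^2) := by positivity
    have : 0 < Real.sqrt (1 + y^2) := by positivity
    linarith
  refine le_of_forall_pos_le_add (fun δ hδ => ?_)
  have := max_principle_eps lam K M s t1 S0 (δ / P) hlam hK hs (by positivity)
    ((abs_nonneg _).trans (h0 0 0)) r m c rt rx mt mx hr hm hrt hrx hmt hmx hpr hpm hc hM h0 t ht x y
  rwa [← hP, div_mul_cancel₀ _ hP0.ne'] at this

lemma abs_le_Lfun (u : ℝ) : |u| ≤ 2 * |Lfun u| := by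
  have h1 : 1 ≤ Real.sqrt (1 + u^2) := by
    rw [Real.one_le_sqrt]; nlinarith
  unfold Lfun
  rcases le_total 0 u with h | h
  · have h2 : 0 ≤ Real.arsinh u := Real.arsinh_nonneg_iff.2 h
    have h3 : u ≤ u * Real.sqrt (1 + u^2) := by nlinarith
    rw [abs_of_nonneg h, abs_of_nonneg (by linarith)]
    linarith
  · have h2 : Real.arsinh u ≤ 0 := Real.arsinh_nonpos_iff.2 h
    have h3 : u * Real.sqrt (1 + u^2) ≤ u := by nlinarith
    rw [abs_of_nonpos h, abs_of_nonpos (by linarith)]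
    linarith

lemma kfun_bdd (B : ℝ) : ∃ K, 0 ≤ K ∧ ∀ η, |η| ≤ B → |kfun η| ≤ K := by
  set d : ℝ := Classical.choice inferInstance with hd
  refine ⟨Real.sqrt (1 + (|d| + B)^2), Real.sqrt_nonneg _, fun η hη => ?_⟩
  have hu : |u1hat η| ≤ |d| + B := by
    unfold u1hat
    by_cases h : ∃ a, Lfun a = -η/2
    · have h1 := abs_le_Lfun (Function.invFun Lfun (-η/2))
      rw [Function.invFun_eq h, abs_div, abs_neg, abs_two] at h1
      have := abs_nonneg d
      linarith
    · rw [Function.invFun_neg h]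
      have := (abs_nonneg η).trans hη
      linarith
  unfold kfun
  rw [abs_of_nonneg (Real.sqrt_nonneg _)]
  apply Real.sqrt_le_sqrt
  have := sq_le_sq' (by linarith [abs_nonneg (u1hat η)]) hu
  rw [sq_abs] at this
  linarith

lemma hasDeriv_of_contDiffOn {T : ℝ} {f : ℝ → ℝ → ℝ}
    (hf : ContDiffOn ℝ 1 (Function.uncurry f) (Set.Ico 0 T ×ˢ (Set.univ : Set ℝ)))
    {t : ℝ} (ht : t ∈ Set.Ioo 0 T) (x : ℝ) :
    HasDerivAt (fun u => f u x) (deriv (fun u => f u x) t) t ∧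
    HasDerivAt (fun y => f t y) (deriv (fun y => f t y) x) x := by
  have hn : Set.Ico 0 T ×ˢ (Set.univ : Set ℝ) ∈ nhds (t, x) :=
    prod_mem_nhds (Ico_mem_nhds ht.1 ht.2) univ_mem
  have hd : DifferentiableAt ℝ (Function.uncurry f) (t, x) :=
    (hf.contDiffAt hn).differentiableAt (by norm_num)
  constructor
  · exact (DifferentiableAt.comp (g := Function.uncurry f) (f := fun u : ℝ => (u, x)) t hd
      (by fun_prop)).hasDerivAt
  · exact (DifferentiableAt.comp (g := Function.uncurry f) (f := fun y : ℝ => (t, y)) x hd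
      (by fun_prop)).hasDerivAt

/-- uniform boundedness of the Riemann functions: for a `C¹` bounded
solution of the diagonal system, the sup over `ℝ²` of `|r(t,x) ± ℓ(t,y)|` never
exceeds its initial value. -/
theorem riemann_functions_bounded
    (lam T : ℝ) (hlam : 0 < lam) (hT : 0 < T)
    (r l : ℝ → ℝ → ℝ)
    (hreg_r : ContDiffOn ℝ 1 (Function.uncurry r) (Set.Ico 0 T ×ˢ (Set.univ : Set ℝ)))
    (hreg_l : ContDiffOn ℝ 1 (Function.uncurry l) (Set.Ico 0 T ×ˢ (Set.univ : Set ℝ)))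
    (hsys_r : ∀ t ∈ Set.Ico (0:ℝ) T, ∀ x : ℝ,
      deriv (fun s => r s x) t + kfun (r t x - l t x) * deriv (fun y => r t y) x
        = -(lam/2) * (r t x + l t x))
    (hsys_l : ∀ t ∈ Set.Ico (0:ℝ) T, ∀ x : ℝ,
      deriv (fun s => l s x) t - kfun (r t x - l t x) * deriv (fun y => l t y) x
        = -(lam/2) * (r t x + l t x))
    (hbdd : ∀ t' : ℝ, t' < T → ∃ M : ℝ, ∀ t ∈ Set.Icc (0:ℝ) t', ∀ x : ℝ,
      |r t x| ≤ M ∧ |l t x| ≤ M ∧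
      |deriv (fun s => r s x) t| ≤ M ∧ |deriv (fun y => r t y) x| ≤ M ∧
      |deriv (fun s => l s x) t| ≤ M ∧ |deriv (fun y => l t y) x| ≤ M) :
    ∀ t ∈ Set.Ico (0:ℝ) T,
      (⨆ p : ℝ × ℝ, |r t p.1 + l t p.2|) ≤ (⨆ p : ℝ × ℝ, |r 0 p.1 + l 0 p.2|) ∧
      (⨆ p : ℝ × ℝ, |r t p.1 - l t p.2|) ≤ (⨆ p : ℝ × ℝ, |r 0 p.1 - l 0 p.2|) := by
  intro t ht
  obtain ⟨M, hM⟩ := hbdd t ht.2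
  obtain ⟨K, hK, hKb⟩ := kfun_bdd (M + M)
  have hsub : Set.Icc 0 t ×ˢ (Set.univ : Set ℝ) ⊆ Set.Ico 0 T ×ˢ (Set.univ : Set ℝ) :=
    Set.prod_mono (fun u hu => ⟨hu.1, hu.2.trans_lt ht.2⟩) subset_rfl
  have hcr := hreg_r.continuousOn.mono hsub
  have hcl := hreg_l.continuousOn.mono hsub
  have hio : ∀ u ∈ Set.Ioc 0 t, u ∈ Set.Ioo 0 T := fun u hu => ⟨hu.1, hu.2.trans_lt ht.2⟩
  have hic : ∀ u ∈ Set.Ioc 0 t, u ∈ Set.Ico 0 T := fun u hu => ⟨hu.1.le, hu.2.trans_lt ht.2⟩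
  have h0t : (0:ℝ) ∈ Set.Icc 0 t := ⟨le_rfl, ht.1⟩
  have htt : t ∈ Set.Icc 0 t := ⟨ht.1, le_rfl⟩
  have hc : ∀ u ∈ Set.Ioc 0 t, ∀ x, |kfun (r u x - l u x)| ≤ K := by
    intro u hu x
    apply hKb
    obtain ⟨h1, h2, -⟩ := hM u ⟨hu.1.le, hu.2⟩ x
    exact (abs_sub _ _).trans (add_le_add h1 h2)
  constructor
  · have hb : BddAbove (Set.range fun p : ℝ × ℝ => |r 0 p.1 + l 0 p.2|) := by
      refine ⟨M + M, ?_⟩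
      rintro _ ⟨p, rfl⟩
      exact (abs_add_le _ _).trans (add_le_add (hM 0 h0t p.1).1 (hM 0 h0t p.2).2.1)
    refine ciSup_le (fun p => ?_)
    exact max_principle lam K M 1 t _ hlam hK (by simp) r l (fun u x => kfun (r u x - l u x))
      (fun u x => deriv (fun v => r v x) u) (fun u x => deriv (fun y => r u y) x)
      (fun u x => deriv (fun v => l v x) u) (fun u x => deriv (fun y => l u y) x)
      hcr hcl
      (fun u hu x => (hasDeriv_of_contDiffOn hreg_r (hio u hu) x).1)
      (fun u hu x => (hasDeriv_of_contDiffOn hreg_r (hio u hu) x).2)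
      (fun u hu x => (hasDeriv_of_contDiffOn hreg_l (hio u hu) x).1)
      (fun u hu x => (hasDeriv_of_contDiffOn hreg_l (hio u hu) x).2)
      (fun u hu x => by linear_combination hsys_r u (hic u hu) x)
      (fun u hu x => by linear_combination hsys_l u (hic u hu) x)
      hc (fun u hu x => ⟨(hM u hu x).1, (hM u hu x).2.1⟩)
      (fun x y => le_ciSup hb (x, y)) t htt p.1 p.2
  · have hb : BddAbove (Set.range fun p : ℝ × ℝ => |r 0 p.1 - l 0 p.2|) := by
      refine ⟨M + M, ?_⟩
      rintro _ ⟨p, rfl⟩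
      exact (abs_sub _ _).trans (add_le_add (hM 0 h0t p.1).1 (hM 0 h0t p.2).2.1)
    refine ciSup_le (fun p => ?_)
    have := max_principle lam K M (-1) t (⨆ p : ℝ × ℝ, |r 0 p.1 - l 0 p.2|) hlam hK (by simp)
      r (fun u x => - l u x) (fun u x => kfun (r u x - l u x))
      (fun u x => deriv (fun v => r v x) u) (fun u x => deriv (fun y => r u y) x)
      (fun u x => - deriv (fun v => l v x) u) (fun u x => - deriv (fun y => l u y) x)
      hcr hcl.neg
      (fun u hu x => (hasDeriv_of_contDiffOn hreg_r (hio u hu) x).1)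
      (fun u hu x => (hasDeriv_of_contDiffOn hreg_r (hio u hu) x).2)
      (fun u hu x => (hasDeriv_of_contDiffOn hreg_l (hio u hu) x).1.neg)
      (fun u hu x => (hasDeriv_of_contDiffOn hreg_l (hio u hu) x).2.neg)
      (fun u hu x => by linear_combination hsys_r u (hic u hu) x)
      (fun u hu x => by linear_combination - hsys_l u (hic u hu) x)
      hc (fun u hu x => ⟨(hM u hu x).1, by rw [abs_neg]; exact (hM u hu x).2.1⟩)
      (fun x y => by rw [← sub_eq_add_neg]; exact le_ciSup hb (x, y)) t htt p.1 p.2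
    rwa [← sub_eq_add_neg] at this
end
end

section
/- Let λ > 0 and let w : [0,T) × ℝ → ℝ be a C² solution of ∂ₜₜw − (1 + (∂ₓw)²)·∂ₓₓw = −λ·∂ₜw. Assume that for every t ∈ [0,T): (i) ∂ₜw(t,·) ∈ L²(ℝ) and ∂ₓw(t,·) ∈ L²(ℝ) ∩ L⁴(ℝ); (ii) differentiation under the integral sign defining E(t) is justified (the integrand and its time derivative are dominated, locally uniformly in t, by integrable functions of x); (iii) ∂ₓw(t,x)·∂ₜw(t,x)·(1 + (1/3)(∂ₓw(t,x))²) → 0 as x → ±∞. Then the energy E(t) := (1/2)∫_ℝ [ (∂ₜw(t,x))² + (∂ₓw(t,x))²·(1 + (1/6)(∂ₓw(t,x))²) ] dx is differentiable on [0,T) and satisfies the dissipation law E'(t) = −λ·∫_ℝ (∂ₜw(t,x))² dx. -/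
open Real Set Filter MeasureTheory

noncomputable section

/-- `∂ₜw`. -/
def wt (w : ℝ → ℝ → ℝ) (t x : ℝ) : ℝ := deriv (fun s => w s x) t

/-- `∂ₓw`. -/
def wx (w : ℝ → ℝ → ℝ) (t x : ℝ) : ℝ := deriv (fun y => w t y) x

/-- `∂ₜₜw`. -/
def wtt (w : ℝ → ℝ → ℝ) (t x : ℝ) : ℝ := deriv (fun s => wt w s x) t

/-- `∂ₜ∂ₓw`. -/
def wtx (w : ℝ → ℝ → ℝ) (t x : ℝ) : ℝ := deriv (fun s => wx w s x) t

/-- `∂ₓₓw`. -/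
def wxx (w : ℝ → ℝ → ℝ) (t x : ℝ) : ℝ := deriv (fun y => wx w t y) x

/-- Fatou in real-valued form. -/
lemma fatou_ev (l : Filter ℝ) [l.IsCountablyGenerated] (F : ℝ → ℝ → ℝ) (f0 f : ℝ → ℝ)
    (hF0 : ∀ t x, 0 ≤ F t x) (hf0 : ∀ x, 0 ≤ f0 x) (hi0 : Integrable f0)
    (hFi : ∀ᶠ t in l, Integrable (F t)) (hle : ∀ x, f0 x ≤ f x)
    (hlim : ∀ x, Tendsto (fun t => F t x) l (nhds (f x))) (c : ℝ) (hc : c < ∫ x, f0 x) :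
    ∀ᶠ t in l, c < ∫ x, F t x := by
  by_contra hcon
  have hfr : ∃ᶠ t in l, Integrable (F t) ∧ (∫ x, F t x) ≤ c := by
    rw [Filter.not_eventually] at hcon
    exact (hcon.and_eventually hFi).mono fun t ht => ⟨ht.2, not_lt.1 ht.1⟩
  obtain ⟨u, hu, hP⟩ := Filter.exists_seq_forall_of_frequently hfr
  have h1 : ∫⁻ x, liminf (fun n => ENNReal.ofReal (F (u n) x)) atTop ≤
      liminf (fun n => ∫⁻ x, ENNReal.ofReal (F (u n) x)) atTop :=
    lintegral_liminf_le' fun n => (hP n).1.aestronglyMeasurable.aemeasurable.ennreal_ofReal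
  have h2 : ∀ x, liminf (fun n => ENNReal.ofReal (F (u n) x)) atTop = ENNReal.ofReal (f x) :=
    fun x => ((ENNReal.continuous_ofReal.tendsto _).comp ((hlim x).comp hu)).liminf_eq
  have h3 : liminf (fun n => ∫⁻ x, ENNReal.ofReal (F (u n) x)) atTop ≤ ENNReal.ofReal c := by
    refine Filter.liminf_le_of_le (by isBoundedDefault) ?_
    intro b hb
    obtain ⟨n, hn⟩ := hb.exists
    refine hn.trans ?_
    rw [← ofReal_integral_eq_lintegral_ofReal (hP n).1 (Eventually.of_forall (hF0 _))]
    exact ENNReal.ofReal_le_ofReal (hP n).2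
  have h4 : ENNReal.ofReal (∫ x, f0 x) ≤ ENNReal.ofReal c := by
    rw [ofReal_integral_eq_lintegral_ofReal hi0 (Eventually.of_forall hf0)]
    refine le_trans (lintegral_mono fun x => ?_) (h1.trans h3)
    simp only [h2 x]
    exact ENNReal.ofReal_le_ofReal (hle x)
  have hc0 : 0 ≤ c := (integral_nonneg (hF0 (u 0))).trans (hP 0).2
  exact absurd ((ENNReal.ofReal_le_ofReal_iff hc0).1 h4) (not_le.2 hc)

/-- If two quantities are lower semicontinuous and their sum converges, the first converges. -/
lemma tendsto_of_lsc (l : Filter ℝ) (A B : ℝ → ℝ) (a b : ℝ)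
    (hA : ∀ c < a, ∀ᶠ t in l, c < A t) (hB : ∀ c < b, ∀ᶠ t in l, c < B t)
    (hAB : Tendsto (fun t => A t + B t) l (nhds (a + b))) : Tendsto A l (nhds a) := by
  rw [tendsto_order]
  refine ⟨hA, fun c hc => ?_⟩
  filter_upwards [hB (b - (c - a) / 2) (by linarith),
    hAB.eventually_lt_const (show a + b < a + b + (c - a) / 2 by linarith)] with t h1 h2
  linarith

/-- `∂ₓw` through the total derivative, up to the initial time. -/
lemma wx_within (T : ℝ) (w : ℝ → ℝ → ℝ)
    (hreg : ContDiffOn ℝ 2 (Function.uncurry w) (Set.Ico 0 T ×ˢ (Set.univ : Set ℝ)))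
    (t : ℝ) (ht : t ∈ Set.Ico 0 T) (x : ℝ) :
    wx w t x = fderivWithin ℝ (Function.uncurry w) (Set.Ico 0 T ×ˢ (Set.univ : Set ℝ)) (t, x) (0, 1) := by
  have hd := ((hreg.differentiableOn (by norm_num)) (t, x) ⟨ht, mem_univ _⟩).hasFDerivWithinAt
  have hc : HasDerivWithinAt (fun y : ℝ => (t, y)) ((0 : ℝ), (1 : ℝ)) univ x :=
    ((hasDerivAt_const x t).prodMk (hasDerivAt_id x)).hasDerivWithinAt
  have hm : MapsTo (fun y : ℝ => (t, y)) univ (Set.Ico 0 T ×ˢ (Set.univ : Set ℝ)) :=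
    fun y _ => ⟨ht, mem_univ _⟩
  have := hd.comp_hasDerivWithinAt x hc hm
  rw [hasDerivWithinAt_univ] at this
  exact this.deriv

/-- the one-sided version of `∂ₜw`. -/
lemma wt_within (T : ℝ) (w : ℝ → ℝ → ℝ)
    (hreg : ContDiffOn ℝ 2 (Function.uncurry w) (Set.Ico 0 T ×ˢ (Set.univ : Set ℝ)))
    (t : ℝ) (ht : t ∈ Set.Ico 0 T) (x : ℝ) :
    HasDerivWithinAt (fun s => w s x)
      (fderivWithin ℝ (Function.uncurry w) (Set.Ico 0 T ×ˢ (Set.univ : Set ℝ)) (t, x) (1, 0))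
      (Set.Ico 0 T) t := by
  have hd := ((hreg.differentiableOn (by norm_num)) (t, x) ⟨ht, mem_univ _⟩).hasFDerivWithinAt
  have hc : HasDerivWithinAt (fun s : ℝ => (s, x)) ((1 : ℝ), (0 : ℝ)) (Set.Ico 0 T) t :=
    ((hasDerivAt_id t).prodMk (hasDerivAt_const t x)).hasDerivWithinAt
  have hm : MapsTo (fun s : ℝ => (s, x)) (Set.Ico 0 T) (Set.Ico 0 T ×ˢ (Set.univ : Set ℝ)) :=
    fun y hy => ⟨hy, mem_univ _⟩
  exact hd.comp_hasDerivWithinAt t hc hm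

/-- Spatial differentiability of `∂ₓw`, `∂ₜw` and symmetry at interior times. -/
lemma interior_derivs (T : ℝ) (w : ℝ → ℝ → ℝ)
    (hreg : ContDiffOn ℝ 2 (Function.uncurry w) (Set.Ico 0 T ×ˢ (Set.univ : Set ℝ)))
    (t : ℝ) (ht : t ∈ Set.Ioo 0 T) (x : ℝ) :
    HasDerivAt (fun y => wx w t y) (wxx w t x) x ∧ HasDerivAt (fun y => wt w t y) (wtx w t x) x := by
  have hat : ∀ s ∈ Set.Ioo 0 T, ∀ y, ContDiffAt ℝ 2 (Function.uncurry w) (s, y) := fun s hs y =>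
    hreg.contDiffAt (prod_mem_nhds (Ico_mem_nhds hs.1 hs.2) univ_mem)
  have hwx : ∀ s ∈ Set.Ioo 0 T, ∀ y, wx w s y = fderiv ℝ (Function.uncurry w) (s, y) (0, 1) := by
    intro s hs y
    have hd := ((hat s hs y).differentiableAt (by norm_num)).hasFDerivAt
    have hc : HasDerivAt (fun y : ℝ => (s, y)) ((0 : ℝ), (1 : ℝ)) y :=
      (hasDerivAt_const y s).prodMk (hasDerivAt_id y)
    exact (hd.comp_hasDerivAt y hc).deriv
  have hwt : ∀ s ∈ Set.Ioo 0 T, ∀ y, wt w s y = fderiv ℝ (Function.uncurry w) (s, y) (1, 0) := by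
    intro s hs y
    have hd := ((hat s hs y).differentiableAt (by norm_num)).hasFDerivAt
    have hc : HasDerivAt (fun s : ℝ => (s, y)) ((1 : ℝ), (0 : ℝ)) s :=
      (hasDerivAt_id s).prodMk (hasDerivAt_const s y)
    exact (hd.comp_hasDerivAt s hc).deriv
  have h2 : HasFDerivAt (fderiv ℝ (Function.uncurry w))
      (fderiv ℝ (fderiv ℝ (Function.uncurry w)) (t, x)) (t, x) :=
    (((hat t ht x).fderiv_right (m := 1) (by norm_num)).differentiableAt (by norm_num)).hasFDerivAt
  have hsymm : IsSymmSndFDerivAt ℝ (Function.uncurry w) (t, x) :=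
    (hat t ht x).isSymmSndFDerivAt (by simp)
  have hcx : HasDerivAt (fun y : ℝ => (t, y)) ((0 : ℝ), (1 : ℝ)) x :=
    (hasDerivAt_const x t).prodMk (hasDerivAt_id x)
  have hct : HasDerivAt (fun s : ℝ => (s, x)) ((1 : ℝ), (0 : ℝ)) t :=
    (hasDerivAt_id t).prodMk (hasDerivAt_const t x)
  have hX := h2.comp_hasDerivAt x hcx
  have hT := h2.comp_hasDerivAt t hct
  have e1 := hX.clm_apply (hasDerivAt_const x ((0 : ℝ), (1 : ℝ)))
  have e2 := hX.clm_apply (hasDerivAt_const x ((1 : ℝ), (0 : ℝ)))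
  have e3 := hT.clm_apply (hasDerivAt_const t ((0 : ℝ), (1 : ℝ)))
  simp only [Function.comp_apply, map_zero, add_zero] at e1 e2 e3
  have f1 : (fun y => wx w t y) = fun y => fderiv ℝ (Function.uncurry w) (t, y) (0, 1) :=
    funext fun y => hwx t ht y
  have f2 : (fun y => wt w t y) = fun y => fderiv ℝ (Function.uncurry w) (t, y) (1, 0) :=
    funext fun y => hwt t ht y
  have f3 : (fun s => wx w s x) =ᶠ[nhds t] fun s => fderiv ℝ (Function.uncurry w) (s, x) (0, 1) := by
    filter_upwards [Ioo_mem_nhds ht.1 ht.2] with s hs using hwx s hs x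
  constructor
  · have : DifferentiableAt ℝ (fun y => wx w t y) x := by
      rw [f1]; exact e1.differentiableAt
    exact this.hasDerivAt
  · have h : wtx w t x = fderiv ℝ (fderiv ℝ (Function.uncurry w)) (t, x) (1, 0) (0, 1) :=
      (e3.congr_of_eventuallyEq f3).deriv
    rw [h, f2, hsymm (1, 0) (0, 1)]
    exact e2

/-- energy dissipation law `E'(t) = −λ ∫ (∂ₜw)²` for `C²` solutions of
the damped quasilinear wave equation, under square/quartic integrability of the
derivatives, justified differentiation under the integral sign, and decay of the
boundary term `∂ₓw·∂ₜw·(1+(1/3)(∂ₓw)²)` at `±∞`. -/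
theorem energy_dissipation_law
    (lam T : ℝ) (hlam : 0 < lam)
    (w : ℝ → ℝ → ℝ)
    (hreg : ContDiffOn ℝ 2 (Function.uncurry w) (Set.Ico 0 T ×ˢ (Set.univ : Set ℝ)))
    (hpde : ∀ t ∈ Set.Ico (0:ℝ) T, ∀ x : ℝ,
      wtt w t x - (1 + (wx w t x)^2) * wxx w t x = -lam * wt w t x)
    (E : ℝ → ℝ)
    (hE : ∀ t : ℝ, E t = (1/2) * ∫ x : ℝ,
      ((wt w t x)^2 + (wx w t x)^2 * (1 + (1/6) * (wx w t x)^2)))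
    -- (i) integrability
    (hint₁ : ∀ t ∈ Set.Ico (0:ℝ) T, Integrable (fun x => (wt w t x)^2))
    (hint₂ : ∀ t ∈ Set.Ico (0:ℝ) T, Integrable (fun x => (wx w t x)^2))
    (hint₃ : ∀ t ∈ Set.Ico (0:ℝ) T, Integrable (fun x => (wx w t x)^4))
    -- (ii) differentiation under the integral sign is justified
    (hDUI : ∀ t ∈ Set.Ico (0:ℝ) T,
      Integrable (fun x => wt w t x * wtt w t x
        + wx w t x * (1 + (1/3) * (wx w t x)^2) * wtx w t x) ∧
      HasDerivAt E (∫ x : ℝ, (wt w t x * wtt w t x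
        + wx w t x * (1 + (1/3) * (wx w t x)^2) * wtx w t x)) t)
    -- (iii) decay of the boundary term
    (hbdry : ∀ t ∈ Set.Ico (0:ℝ) T,
      Filter.Tendsto (fun x => wx w t x * wt w t x * (1 + (1/3) * (wx w t x)^2))
        Filter.atTop (nhds 0) ∧
      Filter.Tendsto (fun x => wx w t x * wt w t x * (1 + (1/3) * (wx w t x)^2))
        Filter.atBot (nhds 0)) :
    ∀ t ∈ Set.Ico (0:ℝ) T,
      HasDerivAt E (-lam * ∫ x : ℝ, (wt w t x)^2) t := by
  have hpos : ∀ t ∈ Set.Ioo (0:ℝ) T, HasDerivAt E (-lam * ∫ x : ℝ, (wt w t x)^2) t := by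
    intro t ht
    have ht' : t ∈ Set.Ico (0:ℝ) T := ⟨ht.1.le, ht.2⟩
    obtain ⟨hI, hD⟩ := hDUI t ht'
    convert hD using 1
    have hder : ∀ x, HasDerivAt (fun x => wx w t x * wt w t x * (1 + (1/3) * (wx w t x)^2))
        ((wt w t x * wtt w t x + wx w t x * (1 + (1/3) * (wx w t x)^2) * wtx w t x)
          + lam * (wt w t x)^2) x := by
      intro x
      obtain ⟨h1, h2⟩ := interior_derivs T w hreg t ht x
      have h := (h1.mul h2).mul (((h1.pow 2).const_mul (1/3)).const_add 1)
      refine h.congr_deriv ?_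
      have hp := hpde t ht' x
      have : wtt w t x = (1 + (wx w t x)^2) * wxx w t x - lam * wt w t x := by linarith
      rw [this]
      simp
      ring
    have hi2 : Integrable (fun x => lam * (wt w t x)^2) := (hint₁ t ht').const_mul lam
    have hz := integral_of_hasDerivAt_of_tendsto hder (hI.add hi2) (hbdry t ht').2 (hbdry t ht').1
    rw [integral_add hI hi2, integral_const_mul] at hz
    linarith
  intro t ht
  rcases ht.1.lt_or_eq with h0 | h0
  · exact hpos t ⟨h0, ht.2⟩
  subst h0
  have hT : 0 < T := ht.2
  have hD := (hDUI 0 ht).2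
  have hmem : Set.Ioo (0:ℝ) T ∈ nhdsWithin 0 (Set.Ioi 0) := Ioo_mem_nhdsGT hT
  have hK : UniqueDiffOn ℝ (Set.Ico (0:ℝ) T ×ˢ (Set.univ : Set ℝ)) :=
    (uniqueDiffOn_Ico 0 T).prod uniqueDiffOn_univ
  have hcont := hreg.continuousOn_fderivWithin hK (by norm_num)
  have hpath : ∀ x : ℝ, Tendsto (fun s : ℝ => (s, x)) (nhdsWithin 0 (Set.Ioi 0))
      (nhdsWithin (0, x) (Set.Ico (0:ℝ) T ×ˢ (Set.univ : Set ℝ))) := by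
    intro x
    refine tendsto_nhdsWithin_iff.2 ⟨?_, ?_⟩
    · exact ((by fun_prop : Continuous fun s : ℝ => (s, x)).tendsto 0).mono_left nhdsWithin_le_nhds
    · filter_upwards [hmem] with s hs using ⟨⟨hs.1.le, hs.2⟩, mem_univ _⟩
  have hlim : ∀ x, Tendsto
      (fun s => fderivWithin ℝ (Function.uncurry w) (Set.Ico 0 T ×ˢ (Set.univ : Set ℝ)) (s, x))
      (nhdsWithin 0 (Set.Ioi 0))
      (nhds (fderivWithin ℝ (Function.uncurry w) (Set.Ico 0 T ×ˢ (Set.univ : Set ℝ)) (0, x))) :=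
    fun x => (hcont (0, x) ⟨ht, mem_univ _⟩).tendsto.comp (hpath x)
  have hlx : ∀ x, Tendsto (fun s => wx w s x) (nhdsWithin 0 (Set.Ioi 0)) (nhds (wx w 0 x)) := by
    intro x
    rw [wx_within T w hreg 0 ht x]
    refine (((ContinuousLinearMap.apply ℝ ℝ ((0, 1) : ℝ × ℝ)).continuous.tendsto _).comp (hlim x)).congr' ?_
    filter_upwards [hmem] with s hs
    exact (wx_within T w hreg s ⟨hs.1.le, hs.2⟩ x).symm
  have hlt : ∀ x, Tendsto (fun s => wt w s x) (nhdsWithin 0 (Set.Ioi 0))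
      (nhds (fderivWithin ℝ (Function.uncurry w) (Set.Ico 0 T ×ˢ (Set.univ : Set ℝ)) (0, x) (1, 0))) := by
    intro x
    refine (((ContinuousLinearMap.apply ℝ ℝ ((1, 0) : ℝ × ℝ)).continuous.tendsto _).comp (hlim x)).congr' ?_
    filter_upwards [hmem] with s hs
    exact (((wt_within T w hreg s ⟨hs.1.le, hs.2⟩ x).hasDerivAt (Ico_mem_nhds hs.1 hs.2)).deriv).symm
  have hle : ∀ x, (wt w 0 x)^2 ≤
      (fderivWithin ℝ (Function.uncurry w) (Set.Ico 0 T ×ˢ (Set.univ : Set ℝ)) (0, x) (1, 0))^2 := by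
    intro x
    by_cases hd : DifferentiableAt ℝ (fun s => w s x) 0
    · have := (uniqueDiffOn_Ico 0 T 0 ht).eq_deriv _ hd.hasDerivAt.hasDerivWithinAt
        (wt_within T w hreg 0 ht x)
      exact le_of_eq (congrArg (· ^ 2) this)
    · have : wt w 0 x = 0 := deriv_zero_of_not_differentiableAt hd
      rw [this, zero_pow two_ne_zero]; exact sq_nonneg _
  have hbi : ∀ s ∈ Set.Ico (0:ℝ) T,
      Integrable (fun x => (wx w s x)^2 * (1 + (1/6) * (wx w s x)^2)) := by
    intro s hs
    refine ((hint₂ s hs).add ((hint₃ s hs).const_mul (1/6))).congr (Eventually.of_forall fun x => ?_)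
    simp only [Pi.add_apply]
    ring
  have hA := fatou_ev (nhdsWithin 0 (Set.Ioi 0)) (fun s x => (wt w s x)^2) (fun x => (wt w 0 x)^2) _
    (fun _ _ => by positivity) (fun _ => by positivity) (hint₁ 0 ht)
    (by filter_upwards [hmem] with s hs using hint₁ s ⟨hs.1.le, hs.2⟩) hle
    (fun x => (hlt x).pow 2)
  have hB := fatou_ev (nhdsWithin 0 (Set.Ioi 0))
    (fun s x => (wx w s x)^2 * (1 + (1/6) * (wx w s x)^2))
    (fun x => (wx w 0 x)^2 * (1 + (1/6) * (wx w 0 x)^2)) _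
    (fun _ _ => by positivity) (fun _ => by positivity) (hbi 0 ht)
    (by filter_upwards [hmem] with s hs using hbi s ⟨hs.1.le, hs.2⟩) (fun _ => le_rfl)
    (fun x => ((hlx x).pow 2).mul ((((hlx x).pow 2).const_mul (1/6)).const_add 1))
  have hsum : ∀ s ∈ Set.Ico (0:ℝ) T, 2 * E s = (∫ x, (wt w s x)^2)
      + ∫ x, (wx w s x)^2 * (1 + (1/6) * (wx w s x)^2) := by
    intro s hs
    rw [hE, integral_add (hint₁ s hs) (hbi s hs)]
    ring
  have hAB : Tendsto (fun s => (∫ x, (wt w s x)^2)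
      + ∫ x, (wx w s x)^2 * (1 + (1/6) * (wx w s x)^2)) (nhdsWithin 0 (Set.Ioi 0))
      (nhds ((∫ x, (wt w 0 x)^2) + ∫ x, (wx w 0 x)^2 * (1 + (1/6) * (wx w 0 x)^2))) := by
    rw [← hsum 0 ht]
    refine ((hD.continuousAt.tendsto.mono_left nhdsWithin_le_nhds).const_mul 2).congr' ?_
    filter_upwards [hmem] with s hs using hsum s ⟨hs.1.le, hs.2⟩
  have hconv := tendsto_of_lsc _ _ _ _ _ hA hB hAB
  have hder : HasDerivWithinAt E (-lam * ∫ x : ℝ, (wt w 0 x)^2) (Set.Ici 0) 0 := by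
    refine hasDerivWithinAt_Ici_of_tendsto_deriv (s := Set.Ioo 0 T)
      (fun s hs => (hpos s hs).differentiableAt.differentiableWithinAt)
      hD.continuousAt.continuousWithinAt hmem ?_
    refine (hconv.const_mul (-lam)).congr' ?_
    filter_upwards [hmem] with s hs using (hpos s hs).deriv.symm
  have := (uniqueDiffWithinAt_Ici (0:ℝ)).eq_deriv _ hder hD.hasDerivWithinAt
  rw [this]
  exact hD
end
end

section
/- Let λ > 0 and let w : [0,T) × ℝ → ℝ be a C² solution of ∂ₜₜw − (1 + (∂ₓw)²)·∂ₓₓw = −λ·∂ₜw with ∂ₜw(0,·) ≡ 0. Assume that for every t ∈ [0,T): w(t,·), ∂ₜw(t,·), ∂ₜₜw(t,·) and x ↦ ∂ₓ(∂ₓw + (1/3)(∂ₓw)³)(t,x) are integrable over ℝ; M(t) := ∫_ℝ w(t,x) dx is twice differentiable with M'(t) = ∫_ℝ ∂ₜw(t,x) dx and M''(t) = ∫_ℝ ∂ₜₜw(t,x) dx; and the limits as x → +∞ and as x → −∞ of ∂ₓw(t,x)·(1 + (1/3)(∂ₓw(t,x))²) exist and are equal to each other. Then the mass is conserved: M(t)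 = M(0) for every t ∈ [0,T). -/
open Real Set Filter MeasureTheory

noncomputable section

/-- mass conservation `M(t) = M(0)` for `C²` solutions of the damped
quasilinear wave equation with zero initial velocity, provided the relevant
integrabilities hold, `M` is twice differentiable with the expected derivatives, and
the limits at `±∞` of `∂ₓw·(1+(1/3)(∂ₓw)²)` exist and coincide. -/
theorem mass_conservation
    (lam T : ℝ) (hlam : 0 < lam)
    (w : ℝ → ℝ → ℝ)
    (hreg : ContDiffOn ℝ 2 (Function.uncurry w) (Set.Ico 0 T ×ˢ (Set.univ : Set ℝ)))
    (hpde : ∀ t ∈ Set.Ico (0:ℝ) T, ∀ x : ℝ,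
      wtt w t x - (1 + (wx w t x)^2) * wxx w t x = -lam * wt w t x)
    (hinit' : ∀ x : ℝ, wt w 0 x = 0)
    (hint₀ : ∀ t ∈ Set.Ico (0:ℝ) T, Integrable (fun x => w t x))
    (hint₁ : ∀ t ∈ Set.Ico (0:ℝ) T, Integrable (fun x => wt w t x))
    (hint₂ : ∀ t ∈ Set.Ico (0:ℝ) T, Integrable (fun x => wtt w t x))
    (hint₃ : ∀ t ∈ Set.Ico (0:ℝ) T, Integrable (fun x =>
      deriv (fun y => wx w t y + (1/3) * (wx w t y)^3) x))
    (M : ℝ → ℝ)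
    (hM : ∀ t : ℝ, M t = ∫ x : ℝ, w t x)
    (hM' : ∀ t ∈ Set.Ico (0:ℝ) T, HasDerivAt M (∫ x : ℝ, wt w t x) t)
    (hM'' : ∀ t ∈ Set.Ico (0:ℝ) T,
      HasDerivAt (fun s => ∫ x : ℝ, wt w s x) (∫ x : ℝ, wtt w t x) t)
    (hlim : ∀ t ∈ Set.Ico (0:ℝ) T, ∃ c : ℝ,
      Filter.Tendsto (fun x => wx w t x * (1 + (1/3) * (wx w t x)^2))
        Filter.atTop (nhds c) ∧
      Filter.Tendsto (fun x => wx w t x * (1 + (1/3) * (wx w t x)^2))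
        Filter.atBot (nhds c)) :
    ∀ t ∈ Set.Ico (0:ℝ) T, M t = M 0 := by
  have hN : ∀ t ∈ Set.Ico (0:ℝ) T,
      (∫ x : ℝ, wtt w t x) = -lam * ∫ x : ℝ, wt w t x := by
    intro t ht
    have hc : ContDiff ℝ 2 (fun y => w t y) := by
      rw [← contDiffOn_univ]
      have h1 : ContDiffOn ℝ 2 (fun y : ℝ => (t, y)) Set.univ :=
        (contDiff_const.prodMk contDiff_id).contDiffOn
      exact hreg.comp h1 (fun y _ => ⟨ht, Set.mem_univ _⟩)
    have hd : Differentiable ℝ (fun y => wx w t y) := by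
      have h2 : ContDiff ℝ (1 + 1) (fun y => w t y) := by
        have h3 : (1 + 1 : WithTop ℕ∞) = 2 := by norm_num
        rw [h3]; exact hc
      exact ((contDiff_succ_iff_deriv.1 h2).2.2).differentiable (by norm_num)
    have hder : ∀ x, HasDerivAt (fun y => wx w t y + (1/3) * (wx w t y)^3)
        ((1 + (wx w t x)^2) * wxx w t x) x := by
      intro x
      have h := (hd x).hasDerivAt
      have h' := h.add ((h.pow 3).const_mul (1/3))
      refine h'.congr_deriv ?_
      unfold wxx
      push_cast
      ring
    obtain ⟨c, hc1, hc2⟩ := hlim t ht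
    have e : (fun x => wx w t x * (1 + (1/3) * (wx w t x)^2))
        = (fun y => wx w t y + (1/3) * (wx w t y)^3) := by
      funext x; ring
    rw [e] at hc1 hc2
    have hi := hint₃ t ht
    have e2 : (fun x => deriv (fun y => wx w t y + (1/3) * (wx w t y)^3) x)
        = (fun x => (1 + (wx w t x)^2) * wxx w t x) := by
      funext x; exact (hder x).deriv
    rw [e2] at hi
    have h0 := integral_of_hasDerivAt_of_tendsto hder hi hc2 hc1
    have e3 : (fun x => wtt w t x)
        = fun x => (1 + (wx w t x)^2) * wxx w t x + (-lam) * wt w t x := by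
      funext x; linarith [hpde t ht x]
    rw [e3, integral_add hi ((hint₁ t ht).const_mul _), h0, integral_const_mul]
    ring
  have hzero : ∀ t ∈ Set.Ico (0:ℝ) T, (∫ x : ℝ, wt w t x) = 0 := by
    intro t ht
    have hE : ∀ s ∈ Set.Icc (0:ℝ) t,
        HasDerivAt (fun s => Real.exp (lam * s) * ∫ x : ℝ, wt w s x) 0 s := by
      intro s hs
      have hs' : s ∈ Set.Ico (0:ℝ) T := ⟨hs.1, hs.2.trans_lt ht.2⟩
      have h1 : HasDerivAt (fun s => Real.exp (lam * s)) (Real.exp (lam * s) * (lam * 1)) s :=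
        ((hasDerivAt_id s).const_mul lam).exp
      refine (h1.mul (hM'' s hs')).congr_deriv ?_
      rw [hN s hs']
      ring
    have h := constant_of_has_deriv_right_zero
      (fun s hs => (hE s hs).continuousAt.continuousWithinAt)
      (fun s hs => (hE s (Set.Ico_subset_Icc_self hs)).hasDerivWithinAt) t ⟨ht.1, le_rfl⟩
    simp only [hinit', integral_zero, mul_zero] at h
    exact (mul_eq_zero.1 h).resolve_left (Real.exp_pos _).ne'
  intro t ht
  have hE : ∀ s ∈ Set.Icc (0:ℝ) t, HasDerivAt M 0 s := by
    intro s hs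
    have hs' : s ∈ Set.Ico (0:ℝ) T := ⟨hs.1, hs.2.trans_lt ht.2⟩
    have h := hM' s hs'
    rwa [hzero s hs'] at h
  exact constant_of_has_deriv_right_zero
    (fun s hs => (hE s hs).continuousAt.continuousWithinAt)
    (fun s hs => (hE s (Set.Ico_subset_Icc_self hs)).hasDerivWithinAt) t ⟨ht.1, le_rfl⟩
end
end

section
/- Let λ > 0 and let r, ℓ : [0,T) × ℝ → ℝ be a C¹ solution of the diagonal system with initial data r(0,·) = r₀ = −ℓ(0,·), where r₀ is bounded and C¹ with bounded derivative, and assume |r(t,x) − ℓ(t,y)| ≤ 2·sup|r₀| for all t ∈ [0,T) and x, y ∈ ℝ. Assume the characteristic flows (t,α) ↦ x₁(t,α) and (t,β) ↦ x₂(t,β) are C¹ jointly in both variables with ∂_α x₁ > 0 and ∂_β x₂ > 0. Then for every fixed α ∈ ℝ and t ∈ [0,T), the equation x₁(t,α) = x₂(t,β) has a unique solution β = β(t,α); the map t ↦ β(t,α) is C¹ and strictly increasing, with ∂ₜβ(t,α) = 2·k(η(t, x₁(t,α))) / c₂(t, β(t,α)) > 0 where c₂ = ∂_β x₂; moreover α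 ≤ β(t,α) ≤ α + 2δt, where δ := k(2·sup|r₀|). Symmetrically, for fixed β the equation x₂(t,β) = x₁(t,α) has a unique solution α = α(t,β), which is C¹ and strictly decreasing in t with ∂ₜα(t,β) = −2·k(η(t, x₂(t,β)))/c₁(t, α(t,β)) < 0, and β − 2δt ≤ α(t,β) ≤ β. -/
open Real Set Filter MeasureTheory

noncomputable section

/-- `η(t,x) = r(t,x) − ℓ(t,x)`. -/
def etafun (r l : ℝ → ℝ → ℝ) (t x : ℝ) : ℝ := r t x - l t x

/-- Weighted Riemann derivative `p(t,x) = A(t)·√(k(η(t,x)))·∂ₓr(t,x)`. -/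
def pfun (lam : ℝ) (r l : ℝ → ℝ → ℝ) (t x : ℝ) : ℝ :=
  Afun lam t * Real.sqrt (kfun (etafun r l t x)) * deriv (fun y => r t y) x

/-- Weighted Riemann derivative `q(t,x) = A(t)·√(k(η(t,x)))·∂ₓℓ(t,x)`. -/
def qfun (lam : ℝ) (r l : ℝ → ℝ → ℝ) (t x : ℝ) : ℝ :=
  Afun lam t * Real.sqrt (kfun (etafun r l t x)) * deriv (fun y => l t y) x

lemma Lfun_strictMono : StrictMono Lfun := by
  have h0 : StrictMonoOn (fun u : ℝ => u * Real.sqrt (1 + u^2)) (Set.Ici 0) := by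
    intro a ha b hb hab
    have ha' : 0 ≤ a := ha
    have h1 : Real.sqrt (1 + a^2) ≤ Real.sqrt (1 + b^2) := Real.sqrt_le_sqrt (by nlinarith)
    have h2 : 0 < Real.sqrt (1 + a^2) := Real.sqrt_pos.mpr (by positivity)
    have h3 : 0 ≤ b := hb
    show a * Real.sqrt (1 + a^2) < b * Real.sqrt (1 + b^2)
    nlinarith
  have h1 : StrictMono (fun u : ℝ => u * Real.sqrt (1 + u^2)) := by
    apply strictMono_of_odd_strictMonoOn_nonneg _ h0
    intro x
    simp
  intro a b hab
  have := h1 hab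
  have h2 := Real.arsinh_strictMono hab
  unfold Lfun
  simp only at this
  linarith

lemma Lfun_neg (u : ℝ) : Lfun (-u) = - Lfun u := by
  unfold Lfun
  rw [Real.arsinh_neg]
  simp only [neg_sq]
  ring

lemma Lfun_continuous : Continuous Lfun := by
  unfold Lfun
  exact continuous_const.mul ((continuous_id.mul (by fun_prop)).add Real.continuous_arsinh)

lemma Lfun_ge (u : ℝ) (hu : 0 ≤ u) : u / 2 ≤ Lfun u := by
  unfold Lfun
  have h1 : 1 ≤ Real.sqrt (1 + u^2) := Real.one_le_sqrt.mpr (by nlinarith)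
  have h2 : 0 ≤ Real.arsinh u := Real.arsinh_nonneg_iff.mpr hu
  nlinarith

lemma Lfun_surj : Function.Surjective Lfun := by
  intro y
  have h1 := Lfun_ge (2 * |y|) (by positivity)
  have h2 := neg_abs_le y
  have h3 := le_abs_self y
  have h4 := Lfun_neg (2 * |y|)
  have := intermediate_value_Icc (a := -(2 * |y|)) (b := 2 * |y|)
    (by linarith [abs_nonneg y]) Lfun_continuous.continuousOn
  obtain ⟨u, -, hu⟩ := this (show y ∈ _ from ⟨by linarith, by linarith⟩)
  exact ⟨u, hu⟩

lemma Lfun_u1hat (η : ℝ) : Lfun (u1hat η) = -η/2 :=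
  Function.rightInverse_invFun Lfun_surj _

lemma kfun_pos (η : ℝ) : 0 < kfun η := Real.sqrt_pos.mpr (by positivity)

lemma kfun_le {η M : ℝ} (h : |η| ≤ M) : kfun η ≤ kfun M := by
  unfold kfun
  apply Real.sqrt_le_sqrt
  have hh := abs_le.mp h
  have h1 : u1hat M ≤ u1hat η := by
    rw [← Lfun_strictMono.le_iff_le, Lfun_u1hat, Lfun_u1hat]; linarith
  have h2 : u1hat η ≤ - u1hat M := by
    rw [← Lfun_strictMono.le_iff_le, Lfun_neg, Lfun_u1hat, Lfun_u1hat]; linarith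
  nlinarith

lemma flow_bound {T δ : ℝ} {f f' : ℝ → ℝ}
    (hf : ∀ t ∈ Set.Ico (0:ℝ) T, HasDerivAt f (f' t) t)
    (h0 : ∀ t ∈ Set.Ico (0:ℝ) T, 0 ≤ f' t) (h1 : ∀ t ∈ Set.Ico (0:ℝ) T, f' t ≤ δ)
    {t : ℝ} (ht : t ∈ Set.Ico (0:ℝ) T) : f 0 ≤ f t ∧ f t ≤ f 0 + δ * t := by
  have hsub : ∀ s ∈ Set.Icc 0 t, s ∈ Set.Ico (0:ℝ) T := fun s hs => ⟨hs.1, hs.2.trans_lt ht.2⟩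
  rcases ht.1.eq_or_lt with h | h
  · subst h; simp
  obtain ⟨c, hc, hc'⟩ := exists_hasDerivAt_eq_slope f f' h
    (fun s hs => (hf s (hsub s hs)).continuousAt.continuousWithinAt)
    (fun s hs => hf s (hsub s ⟨hs.1.le, hs.2.le⟩))
  have hcm := hsub c ⟨hc.1.le, hc.2.le⟩
  have a0 := h0 c hcm
  have a1 := h1 c hcm
  rw [hc'] at a0 a1
  rw [div_le_iff₀ (by linarith)] at a1
  rw [le_div_iff₀ (by linarith)] at a0
  constructor <;> nlinarith

/-- partial derivatives of a jointly C¹ map -/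
lemma partials {T : ℝ} {Y : ℝ → ℝ → ℝ}
    (hY : ContDiffOn ℝ 1 (Function.uncurry Y) (Set.Ico 0 T ×ˢ (Set.univ : Set ℝ)))
    {Y' : ℝ → ℝ → ℝ}
    (hYt : ∀ b : ℝ, ∀ t ∈ Set.Ico (0:ℝ) T, HasDerivAt (fun s => Y s b) (Y' t b) t) :
    (∀ t ∈ Set.Ico (0:ℝ) T, ∀ b, HasDerivAt (fun b' => Y t b') (deriv (fun b' => Y t b') b) b) ∧
    ContinuousOn (fun p : ℝ × ℝ => deriv (fun b' => Y p.1 b') p.2)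
      (Set.Ico 0 T ×ˢ (Set.univ : Set ℝ)) ∧
    ContinuousOn (fun p : ℝ × ℝ => Y' p.1 p.2) (Set.Ico 0 T ×ˢ (Set.univ : Set ℝ)) := by
  have hud : UniqueDiffOn ℝ (Set.Ico 0 T ×ˢ (Set.univ : Set ℝ)) :=
    (uniqueDiffOn_Ico 0 T).prod uniqueDiffOn_univ
  have hc := hY.continuousOn_fderivWithin hud le_rfl
  have hd : ∀ t ∈ Set.Ico (0:ℝ) T, ∀ b, HasFDerivWithinAt (Function.uncurry Y)
      (fderivWithin ℝ (Function.uncurry Y) (Set.Ico 0 T ×ˢ (Set.univ : Set ℝ)) (t, b))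
      (Set.Ico 0 T ×ˢ (Set.univ : Set ℝ)) (t, b) := fun t ht b =>
    ((hY.differentiableOn one_ne_zero) (t, b) ⟨ht, trivial⟩).hasFDerivWithinAt
  have h1 : ∀ t ∈ Set.Ico (0:ℝ) T, ∀ b, HasDerivAt (fun b' => Y t b')
      (fderivWithin ℝ (Function.uncurry Y) (Set.Ico 0 T ×ˢ (Set.univ : Set ℝ)) (t, b) (0, 1)) b := by
    intro t ht b
    have e : HasDerivWithinAt (fun b' : ℝ => (t, b')) ((0:ℝ), (1:ℝ)) Set.univ b :=
      ((hasDerivAt_const b t).prodMk (hasDerivAt_id b)).hasDerivWithinAt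
    have := (hd t ht b).comp_hasDerivWithinAt b e (fun x _ => Set.mk_mem_prod ht trivial)
    exact hasDerivWithinAt_univ.mp this
  have h2 : ∀ t ∈ Set.Ico (0:ℝ) T, ∀ b, Y' t b =
      fderivWithin ℝ (Function.uncurry Y) (Set.Ico 0 T ×ˢ (Set.univ : Set ℝ)) (t, b) (1, 0) := by
    intro t ht b
    have e : HasDerivWithinAt (fun s : ℝ => (s, b)) ((1:ℝ), (0:ℝ)) (Set.Ico 0 T) t :=
      ((hasDerivAt_id t).prodMk (hasDerivAt_const t b)).hasDerivWithinAt
    have hmaps : Set.MapsTo (fun s : ℝ => (s, b)) (Set.Ico 0 T)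
        (Set.Ico 0 T ×ˢ (Set.univ : Set ℝ)) := fun x hx => ⟨hx, trivial⟩
    have := (hd t ht b).comp_hasDerivWithinAt t e hmaps
    exact (uniqueDiffOn_Ico 0 T t ht).eq_deriv _ (hYt b t ht).hasDerivWithinAt this
  refine ⟨fun t ht b => (h1 t ht b).differentiableAt.hasDerivAt, ?_, ?_⟩
  · refine (hc.clm_apply (continuousOn_const (c := ((0:ℝ), (1:ℝ))))).congr ?_
    rintro ⟨t, b⟩ ⟨ht, -⟩
    exact (h1 t ht b).deriv
  · refine (hc.clm_apply (continuousOn_const (c := ((1:ℝ), (0:ℝ))))).congr ?_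
    rintro ⟨t, b⟩ ⟨ht, -⟩
    exact h2 t ht b

lemma partial_t {T : ℝ} {Y : ℝ → ℝ → ℝ}
    (hY : ContDiffOn ℝ 1 (Function.uncurry Y) (Set.Ico 0 T ×ˢ (Set.univ : Set ℝ)))
    (Y' : ℝ → ℝ → ℝ)
    (hYt : ∀ b : ℝ, ∀ t ∈ Set.Ico (0:ℝ) T, HasDerivAt (fun s => Y s b) (Y' t b) t) (b : ℝ) :
    ContinuousOn (fun t => Y' t b) (Set.Ico 0 T) := by
  have hm : Set.MapsTo (fun t : ℝ => (t, b)) (Set.Ico 0 T)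
      (Set.Ico 0 T ×ˢ (Set.univ : Set ℝ)) := fun t ht => ⟨ht, trivial⟩
  have hpc : ContinuousOn (fun t : ℝ => (t, b)) (Set.Ico 0 T) := by fun_prop
  exact (partials hY hYt).2.2.comp hpc hm

lemma corr {T δ : ℝ} {Y Y' : ℝ → ℝ → ℝ} {y y' : ℝ → ℝ}
    (hY : ContDiffOn ℝ 1 (Function.uncurry Y) (Set.Ico 0 T ×ˢ (Set.univ : Set ℝ)))
    (hYt : ∀ b : ℝ, ∀ t ∈ Set.Ico (0:ℝ) T, HasDerivAt (fun s => Y s b) (Y' t b) t)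
    (hpos : ∀ t ∈ Set.Ico (0:ℝ) T, ∀ b : ℝ, 0 < deriv (fun b' => Y t b') b)
    (hbd : ∀ t ∈ Set.Ico (0:ℝ) T, ∀ b : ℝ, |Y t b - b| ≤ δ * t)
    (hy : ∀ t ∈ Set.Ico (0:ℝ) T, HasDerivAt y (y' t) t)
    (hy' : ContinuousOn y' (Set.Ico 0 T)) :
    ∃ bm : ℝ → ℝ, (∀ t ∈ Set.Ico (0:ℝ) T, y t = Y t (bm t) ∧ ∀ b', y t = Y t b' → b' = bm t) ∧
      ContDiffOn ℝ 1 bm (Set.Ico 0 T) ∧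
      ∀ t ∈ Set.Ico (0:ℝ) T, HasDerivAt bm
        ((y' t - Y' t (bm t)) / deriv (fun b' => Y t b') (bm t)) t := by
  obtain ⟨hYb, hcc, hYc'⟩ := partials hY hYt
  have hmono : ∀ t ∈ Set.Ico (0:ℝ) T, StrictMono (fun b => Y t b) := fun t ht =>
    strictMono_of_deriv_pos (hpos t ht)
  have hex : ∀ t ∈ Set.Ico (0:ℝ) T, ∃ b, y t = Y t b := by
    intro t ht
    have hcont : Continuous (fun b => Y t b) :=
      continuous_iff_continuousAt.mpr fun b => (hYb t ht b).continuousAt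
    have a1 := abs_le.mp (hbd t ht (y t - δ * t))
    have a2 := abs_le.mp (hbd t ht (y t + δ * t))
    have a3 := (abs_nonneg _).trans (hbd t ht 0)
    obtain ⟨b, -, hb⟩ := intermediate_value_Icc (a := y t - δ * t) (b := y t + δ * t)
      (by linarith) hcont.continuousOn (show y t ∈ _ from ⟨by linarith, by linarith⟩)
    exact ⟨b, hb.symm⟩
  choose! g hg using hex
  -- continuity of g
  have hgc : ContinuousOn g (Set.Ico 0 T) := by
    intro t ht
    rw [ContinuousWithinAt, tendsto_order]
    have hsub : ∀ᶠ s in nhdsWithin t (Set.Ico 0 T), s ∈ Set.Ico 0 T := self_mem_nhdsWithin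
    constructor
    · intro b hb
      have h1 : Y t b < y t := by rw [hg t ht]; exact hmono t ht hb
      have h2 := ((hYt b t ht).continuousAt.eventually_lt (hy t ht).continuousAt h1).filter_mono
        (nhdsWithin_le_nhds (s := Set.Ico 0 T))
      filter_upwards [h2, hsub] with s hs hs'
      rw [hg s hs'] at hs
      exact (hmono s hs').lt_iff_lt.mp hs
    · intro b hb
      have h1 : y t < Y t b := by rw [hg t ht]; exact hmono t ht hb
      have h2 := ((hy t ht).continuousAt.eventually_lt (hYt b t ht).continuousAt h1).filter_mono
        (nhdsWithin_le_nhds (s := Set.Ico 0 T))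
      filter_upwards [h2, hsub] with s hs hs'
      rw [hg s hs'] at hs
      exact (hmono s hs').lt_iff_lt.mp hs
  -- mean value point
  have hmv : ∀ t ∈ Set.Ico (0:ℝ) T, ∀ s ∈ Set.Ico (0:ℝ) T, ∃ ξ, |ξ - g t| ≤ |g s - g t| ∧
      Y s (g s) - Y s (g t) = deriv (fun b' => Y s b') ξ * (g s - g t) := by
    intro t ht s hs
    rcases lt_trichotomy (g t) (g s) with h | h | h
    · obtain ⟨c, hc, hc'⟩ := exists_hasDerivAt_eq_slope (fun b => Y s b)
        (fun b => deriv (fun b' => Y s b') b) h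
        (fun b _ => (hYb s hs b).continuousAt.continuousWithinAt) (fun b _ => hYb s hs b)
      refine ⟨c, ?_, ?_⟩
      · rw [abs_of_pos (by linarith [hc.1]), abs_of_pos (by linarith)]; linarith [hc.2]
      · rw [hc', div_mul_cancel₀ _ (by linarith)]
    · exact ⟨g t, by simp, by rw [h]; simp⟩
    · obtain ⟨c, hc, hc'⟩ := exists_hasDerivAt_eq_slope (fun b => Y s b)
        (fun b => deriv (fun b' => Y s b') b) h
        (fun b _ => (hYb s hs b).continuousAt.continuousWithinAt) (fun b _ => hYb s hs b)
      refine ⟨c, ?_, ?_⟩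
      · rw [abs_of_neg (by linarith [hc.2]), abs_of_neg (by linarith)]; linarith [hc.1]
      · rw [hc', ← neg_sub (g t) (g s), mul_neg, div_mul_cancel₀ _ (by linarith)]
        ring
  choose! ξ hξ1 hξ2 using hmv
  have hgd : ∀ t ∈ Set.Ico (0:ℝ) T, HasDerivWithinAt g
      ((y' t - Y' t (g t)) / deriv (fun b' => Y t b') (g t)) (Set.Ico 0 T) t := by
    intro t ht
    rw [hasDerivWithinAt_iff_tendsto_slope]
    have s1 := hasDerivWithinAt_iff_tendsto_slope.mp
      ((hy t ht).hasDerivWithinAt (s := Set.Ico 0 T))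
    have s2 := hasDerivWithinAt_iff_tendsto_slope.mp
      ((hYt (g t) t ht).hasDerivWithinAt (s := Set.Ico 0 T))
    have hle : nhdsWithin t (Set.Ico 0 T \ {t}) ≤ nhdsWithin t (Set.Ico 0 T) :=
      nhdsWithin_mono _ Set.sdiff_subset
    have hsub : ∀ᶠ s in nhdsWithin t (Set.Ico 0 T \ {t}), s ∈ Set.Ico 0 T \ {t} :=
      self_mem_nhdsWithin
    have hξ : Tendsto (ξ t) (nhdsWithin t (Set.Ico 0 T \ {t})) (nhds (g t)) := by
      rw [tendsto_iff_dist_tendsto_zero]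
      have h0 := tendsto_iff_dist_tendsto_zero.mp ((hgc t ht).mono_left hle)
      refine tendsto_of_tendsto_of_tendsto_of_le_of_le' tendsto_const_nhds h0
        (Eventually.of_forall fun s => dist_nonneg) ?_
      filter_upwards [hsub] with s hs
      exact hξ1 t ht s hs.1
    have hpair : Tendsto (fun s => (s, ξ t s)) (nhdsWithin t (Set.Ico 0 T \ {t}))
        (nhdsWithin (t, g t) (Set.Ico 0 T ×ˢ (Set.univ : Set ℝ))) := by
      refine tendsto_nhdsWithin_iff.mpr ⟨?_, ?_⟩
      · rw [nhds_prod_eq]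
        exact (tendsto_id.mono_left nhdsWithin_le_nhds).prodMk hξ
      · filter_upwards [hsub] with s hs
        exact ⟨hs.1, trivial⟩
    have s3 : Tendsto (fun s => deriv (fun b' => Y s b') (ξ t s))
        (nhdsWithin t (Set.Ico 0 T \ {t})) (nhds (deriv (fun b' => Y t b') (g t))) :=
      (hcc (t, g t) ⟨ht, trivial⟩).tendsto.comp hpair
    refine ((s1.sub s2).div s3 (hpos t ht (g t)).ne').congr' ?_
    filter_upwards [hsub] with s hs
    have hp := hpos s hs.1 (ξ t s)
    have h2 := hξ2 t ht s hs.1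
    have hst : s - t ≠ 0 := sub_ne_zero.mpr hs.2
    simp only [Pi.div_apply, slope_def_field]
    rw [hg s hs.1, hg t ht, div_sub_div_same, div_div, div_eq_div_iff (by positivity) hst]
    linear_combination (s - t) * h2
  refine ⟨fun t => if 0 ≤ t then g t else
    g 0 + t * ((y' 0 - Y' 0 (g 0)) / deriv (fun b' => Y 0 b') (g 0)), ?_⟩
  set bm : ℝ → ℝ := fun t => if 0 ≤ t then g t else
    g 0 + t * ((y' 0 - Y' 0 (g 0)) / deriv (fun b' => Y 0 b') (g 0)) with hbm
  have hbe : ∀ t, 0 ≤ t → bm t = g t := fun t ht => by simp [hbm, ht]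
  have hbd' : ∀ t ∈ Set.Ico (0:ℝ) T, HasDerivAt bm
        ((y' t - Y' t (bm t)) / deriv (fun b' => Y t b') (bm t)) t := by
    intro t ht
    rw [hbe t ht.1]
    have hw : HasDerivWithinAt bm ((y' t - Y' t (g t)) / deriv (fun b' => Y t b') (g t))
        (Set.Ico 0 T) t := (hgd t ht).congr (fun s hs => hbe s hs.1) (hbe t ht.1)
    rcases ht.1.eq_or_lt with h | h
    · subst h
      have hl : HasDerivWithinAt bm ((y' 0 - Y' 0 (g 0)) / deriv (fun b' => Y 0 b') (g 0))
          (Set.Iic 0) 0 := by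
        have : HasDerivAt (fun t : ℝ => g 0 +
            t * ((y' 0 - Y' 0 (g 0)) / deriv (fun b' => Y 0 b') (g 0)))
            (1 * ((y' 0 - Y' 0 (g 0)) / deriv (fun b' => Y 0 b') (g 0))) 0 :=
          ((hasDerivAt_id (0:ℝ)).mul_const _).const_add _
        rw [one_mul] at this
        refine this.hasDerivWithinAt.congr ?_ ?_
        · intro s hs
          rcases (show s ≤ 0 from hs).eq_or_lt with h | h
          · subst h; simp [hbm]
          · simp [hbm, not_le.mpr h]
        · simp [hbm]
      refine (hl.union hw).hasDerivAt ?_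
      rw [Set.Iic_union_Ico_eq_Iio ht.2]
      exact Iio_mem_nhds ht.2
    · exact hw.hasDerivAt (Ico_mem_nhds h ht.2)
  refine ⟨?_, ?_, hbd'⟩
  · intro t ht
    rw [hbe t ht.1]
    refine ⟨hg t ht, fun b' hb' => (hmono t ht).injective ?_⟩
    show Y t b' = Y t (g t)
    rw [← hb', ← hg t ht]
  · have hdc : ContinuousOn (fun t => (y' t - Y' t (bm t)) / deriv (fun b' => Y t b') (bm t))
        (Set.Ico 0 T) := by
      have hpc : ContinuousOn (fun t => (t, bm t)) (Set.Ico 0 T) :=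
        continuousOn_id.prodMk fun t ht => (hbd' t ht).continuousAt.continuousWithinAt
      have hm : Set.MapsTo (fun t => (t, bm t)) (Set.Ico 0 T)
        (Set.Ico 0 T ×ˢ (Set.univ : Set ℝ)) := fun t ht => ⟨ht, trivial⟩
      exact (hy'.sub (hYc'.comp hpc hm)).div (hcc.comp hpc hm) fun t ht => (hpos t ht _).ne'
    rw [show (1 : WithTop ℕ∞) = 0 + 1 from (zero_add 1).symm,
      contDiffOn_succ_iff_derivWithin (uniqueDiffOn_Ico 0 T)]
    refine ⟨fun t ht => (hbd' t ht).differentiableAt.differentiableWithinAt, by simp, ?_⟩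
    rw [contDiffOn_zero]
    exact hdc.congr fun t ht =>
      (hbd' t ht).hasDerivWithinAt.derivWithin (uniqueDiffOn_Ico 0 T t ht)

/-- existence, uniqueness and properties of the correspondence maps
`β(t,α)` and `α(t,β)` between forward and backward characteristics: they are `C¹`,
strictly monotone in `t` with the stated derivative, and confined by the bounds
`α ≤ β(t,α) ≤ α + 2δt` and `β − 2δt ≤ α(t,β) ≤ β`, where `δ = k(2·sup|r₀|)`. -/
theorem correspondence_maps_between_characteristics
    (lam T : ℝ) (hlam : 0 < lam)
    (r l : ℝ → ℝ → ℝ) (r₀ : ℝ → ℝ)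
    (hreg_r : ContDiffOn ℝ 1 (Function.uncurry r) (Set.Ico 0 T ×ˢ (Set.univ : Set ℝ)))
    (hreg_l : ContDiffOn ℝ 1 (Function.uncurry l) (Set.Ico 0 T ×ˢ (Set.univ : Set ℝ)))
    (hsys_r : ∀ t ∈ Set.Ico (0:ℝ) T, ∀ x : ℝ,
      deriv (fun s => r s x) t + kfun (etafun r l t x) * deriv (fun y => r t y) x
        = -(lam/2) * (r t x + l t x))
    (hsys_l : ∀ t ∈ Set.Ico (0:ℝ) T, ∀ x : ℝ,
      deriv (fun s => l s x) t - kfun (etafun r l t x) * deriv (fun y => l t y) x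
        = -(lam/2) * (r t x + l t x))
    (hr0 : ∀ x : ℝ, r 0 x = r₀ x)
    (hl0 : ∀ x : ℝ, l 0 x = -r₀ x)
    (hr₀reg : ContDiff ℝ 1 r₀)
    (hr₀bdd : ∃ C : ℝ, ∀ x : ℝ, |r₀ x| ≤ C)
    (hr₀'bdd : ∃ C : ℝ, ∀ x : ℝ, |deriv r₀ x| ≤ C)
    (hetabdd : ∀ t ∈ Set.Ico (0:ℝ) T, ∀ x y : ℝ,
      |r t x - l t y| ≤ 2 * ⨆ z : ℝ, |r₀ z|)
    (x₁ x₂ : ℝ → ℝ → ℝ)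
    (hflowreg₁ : ContDiffOn ℝ 1 (Function.uncurry x₁) (Set.Ico 0 T ×ˢ (Set.univ : Set ℝ)))
    (hflowreg₂ : ContDiffOn ℝ 1 (Function.uncurry x₂) (Set.Ico 0 T ×ˢ (Set.univ : Set ℝ)))
    (hx₁0 : ∀ a : ℝ, x₁ 0 a = a)
    (hx₁ : ∀ a : ℝ, ∀ t ∈ Set.Ico (0:ℝ) T,
      HasDerivAt (fun s => x₁ s a) (kfun (etafun r l t (x₁ t a))) t)
    (hx₂0 : ∀ b : ℝ, x₂ 0 b = b)
    (hx₂ : ∀ b : ℝ, ∀ t ∈ Set.Ico (0:ℝ) T,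
      HasDerivAt (fun s => x₂ s b) (-(kfun (etafun r l t (x₂ t b)))) t)
    (hc₁pos : ∀ t ∈ Set.Ico (0:ℝ) T, ∀ a : ℝ, 0 < deriv (fun a' => x₁ t a') a)
    (hc₂pos : ∀ t ∈ Set.Ico (0:ℝ) T, ∀ b : ℝ, 0 < deriv (fun b' => x₂ t b') b) :
    ∃ bmap amap : ℝ → ℝ → ℝ,
      -- existence and uniqueness of β(t,α)
      (∀ t ∈ Set.Ico (0:ℝ) T, ∀ a : ℝ,
        x₁ t a = x₂ t (bmap t a) ∧ (∀ b' : ℝ, x₁ t a = x₂ t b' → b' = bmap t a)) ∧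
      -- regularity and strict monotonicity of t ↦ β(t,α)
      (∀ a : ℝ, ContDiffOn ℝ 1 (fun t => bmap t a) (Set.Ico 0 T) ∧
        StrictMonoOn (fun t => bmap t a) (Set.Ico 0 T)) ∧
      -- derivative formula, positivity and bounds for β(t,α)
      (∀ a : ℝ, ∀ t ∈ Set.Ico (0:ℝ) T,
        HasDerivAt (fun s => bmap s a)
          (2 * kfun (etafun r l t (x₁ t a)) / deriv (fun b' => x₂ t b') (bmap t a)) t ∧
        0 < 2 * kfun (etafun r l t (x₁ t a)) / deriv (fun b' => x₂ t b') (bmap t a) ∧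
        a ≤ bmap t a ∧ bmap t a ≤ a + 2 * kfun (2 * ⨆ z : ℝ, |r₀ z|) * t) ∧
      -- existence and uniqueness of α(t,β)
      (∀ t ∈ Set.Ico (0:ℝ) T, ∀ b : ℝ,
        x₂ t b = x₁ t (amap t b) ∧ (∀ a' : ℝ, x₂ t b = x₁ t a' → a' = amap t b)) ∧
      -- regularity and strict antitonicity of t ↦ α(t,β)
      (∀ b : ℝ, ContDiffOn ℝ 1 (fun t => amap t b) (Set.Ico 0 T) ∧
        StrictAntiOn (fun t => amap t b) (Set.Ico 0 T)) ∧
      -- derivative formula, negativity and bounds for α(t,β)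
      (∀ b : ℝ, ∀ t ∈ Set.Ico (0:ℝ) T,
        HasDerivAt (fun s => amap s b)
          (-(2 * kfun (etafun r l t (x₂ t b)) / deriv (fun a' => x₁ t a') (amap t b))) t ∧
        -(2 * kfun (etafun r l t (x₂ t b)) / deriv (fun a' => x₁ t a') (amap t b)) < 0 ∧
        b - 2 * kfun (2 * ⨆ z : ℝ, |r₀ z|) * t ≤ amap t b ∧ amap t b ≤ b) := by
  have hk : ∀ t ∈ Set.Ico (0:ℝ) T, ∀ x, kfun (etafun r l t x) ≤ kfun (2 * ⨆ z : ℝ, |r₀ z|) :=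
    fun t ht x => kfun_le (hetabdd t ht x x)
  have hδ0 : 0 < kfun (2 * ⨆ z : ℝ, |r₀ z|) := kfun_pos _
  generalize kfun (2 * ⨆ z : ℝ, |r₀ z|) = δ at hk hδ0 ⊢
  have b1 : ∀ t ∈ Set.Ico (0:ℝ) T, ∀ a, a ≤ x₁ t a ∧ x₁ t a ≤ a + δ * t := by
    intro t ht a
    have := flow_bound (hx₁ a) (fun s hs => (kfun_pos _).le) (fun s hs => hk s hs _) ht
    simpa only [hx₁0] using this
  have b2 : ∀ t ∈ Set.Ico (0:ℝ) T, ∀ b, x₂ t b ≤ b ∧ b - δ * t ≤ x₂ t b := by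
    intro t ht b
    have := flow_bound (f := fun s => - x₂ s b) (f' := fun s => kfun (etafun r l s (x₂ s b)))
      (fun s hs => by
        have h := (hx₂ b s hs).neg
        rw [neg_neg] at h
        exact h)
      (fun s hs => (kfun_pos _).le) (fun s hs => hk s hs _) ht
    simp only [hx₂0] at this
    constructor <;> linarith [this.1, this.2]
  have P1 : ∀ a, ContinuousOn (fun t => kfun (etafun r l t (x₁ t a))) (Set.Ico 0 T) := fun a =>
    partial_t hflowreg₁ (fun t a => kfun (etafun r l t (x₁ t a))) hx₁ a
  have P2 : ∀ b, ContinuousOn (fun t => -kfun (etafun r l t (x₂ t b))) (Set.Ico 0 T) := fun b =>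
    partial_t hflowreg₂ (fun t b => -kfun (etafun r l t (x₂ t b))) hx₂ b
  have hδt : ∀ t ∈ Set.Ico (0:ℝ) T, 0 ≤ δ * t := fun t ht => mul_nonneg hδ0.le ht.1
  have B1 : ∀ t ∈ Set.Ico (0:ℝ) T, ∀ b : ℝ, |x₁ t b - b| ≤ δ * t := by
    intro t ht b
    obtain ⟨h1, h2⟩ := b1 t ht b
    have h3 := hδt t ht
    exact abs_le.mpr ⟨by linarith, by linarith⟩
  have B2 : ∀ t ∈ Set.Ico (0:ℝ) T, ∀ b : ℝ, |x₂ t b - b| ≤ δ * t := by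
    intro t ht b
    obtain ⟨h1, h2⟩ := b2 t ht b
    have h3 := hδt t ht
    exact abs_le.mpr ⟨by linarith, by linarith⟩
  have A := fun a => corr (δ := δ) (Y' := fun t b => -kfun (etafun r l t (x₂ t b)))
    (y := fun t => x₁ t a) (y' := fun t => kfun (etafun r l t (x₁ t a))) hflowreg₂ hx₂ hc₂pos
    B2 (hx₁ a)
    (P1 a)
  have B := fun b => corr (δ := δ) (Y' := fun t a => kfun (etafun r l t (x₁ t a)))
    (y := fun t => x₂ t b) (y' := fun t => -kfun (etafun r l t (x₂ t b))) hflowreg₁ hx₁ hc₁pos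
    B1 (hx₂ b)
    (P2 b)
  choose bm hbm1 hbm2 hbm3 using A
  choose am ham1 ham2 ham3 using B
  have hbd : ∀ a, ∀ t ∈ Set.Ico (0:ℝ) T, HasDerivAt (bm a)
      (2 * kfun (etafun r l t (x₁ t a)) / deriv (fun b' => x₂ t b') (bm a t)) t := by
    intro a t ht
    have := hbm3 a t ht
    rwa [← (hbm1 a t ht).1, sub_neg_eq_add, ← two_mul] at this
  have had : ∀ b, ∀ t ∈ Set.Ico (0:ℝ) T, HasDerivAt (am b)
      (-(2 * kfun (etafun r l t (x₂ t b)) / deriv (fun a' => x₁ t a') (am b t))) t := by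
    intro b t ht
    have := ham3 b t ht
    rwa [← (ham1 b t ht).1, ← neg_add', ← two_mul, neg_div] at this
  have hbp : ∀ a, ∀ t ∈ Set.Ico (0:ℝ) T,
      0 < 2 * kfun (etafun r l t (x₁ t a)) / deriv (fun b' => x₂ t b') (bm a t) :=
    fun a t ht => div_pos (mul_pos two_pos (kfun_pos _)) (hc₂pos t ht _)
  have hap : ∀ b, ∀ t ∈ Set.Ico (0:ℝ) T,
      -(2 * kfun (etafun r l t (x₂ t b)) / deriv (fun a' => x₁ t a') (am b t)) < 0 :=
    fun b t ht => neg_lt_zero.mpr (div_pos (mul_pos two_pos (kfun_pos _)) (hc₁pos t ht _))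
  refine ⟨fun t a => bm a t, fun t b => am b t, fun t ht a => hbm1 a t ht,
    fun a => ⟨hbm2 a, ?_⟩, fun a t ht => ⟨hbd a t ht, hbp a t ht, ?_, ?_⟩,
    fun t ht b => ham1 b t ht, fun b => ⟨ham2 b, ?_⟩,
    fun b t ht => ⟨had b t ht, hap b t ht, ?_, ?_⟩⟩
  · refine strictMonoOn_of_deriv_pos (convex_Ico 0 T) (hbm2 a).continuousOn fun t ht => ?_
    have ht' := interior_subset ht
    show 0 < deriv (bm a) t
    rw [(hbd a t ht').deriv]
    exact hbp a t ht'
  · have := (hbm1 a t ht).1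
    linarith [(b1 t ht a).1, (b2 t ht (bm a t)).1]
  · have := (hbm1 a t ht).1
    linarith [(b1 t ht a).2, (b2 t ht (bm a t)).2]
  · refine strictAntiOn_of_deriv_neg (convex_Ico 0 T) (ham2 b).continuousOn fun t ht => ?_
    have ht' := interior_subset ht
    show deriv (am b) t < 0
    rw [(had b t ht').deriv]
    exact hap b t ht'
  · have := (ham1 b t ht).1
    linarith [(b1 t ht (am b t)).2, (b2 t ht b).2]
  · have := (ham1 b t ht).1
    linarith [(b1 t ht (am b t)).1, (b2 t ht b).1]
end
end

section
/- Let λ > 0 and let r, ℓ : [0,T) × ℝ → ℝ be a C¹ solution of the diagonal system with initial data r(0,·) = r₀ = −ℓ(0,·), where r₀ is bounded and C¹, the limit r₀(+∞) := lim_{x→+∞} r₀(x) exists and is finite, and |r(t,x) − ℓ(t,y)| ≤ 2·sup|r₀| for all t, x, y; assume the characteristic flows and the correspondence map β(t,α) exist and are C¹. Suppose α ∈ ℝ satisfies: r₀'(α)·(r₀(α) + r₀(+∞)) < 0, r₀'(x)·r₀(α) < 0 for every x ≥ α, and in addition either r₀(α)·r₀(+∞) > 0 or r₀(+∞) = 0.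 Then the sign of η is preserved along the forward characteristic x₁(·,α): for every t ∈ [0,T), η(t, x₁(t,α))·η(0,α) > 0, where η(0,α) = 2r₀(α). -/
open Real Set Filter MeasureTheory

noncomputable section

/-- Local curve with slope `κ` through a point of the region, staying in the region backwards. -/
lemma exists_back_curve (X Y : ℝ → ℝ) (κ s₀ x₀ X' : ℝ) (hκ : 0 ≤ κ) (hs₀ : 0 < s₀)
    (hX : HasDerivAt X X' s₀) (hXκ : X s₀ = x₀ → X' = κ)
    (hXmono : ∀ s ∈ Ico 0 s₀, X s ≤ X s₀) (hYanti : ∀ s ∈ Ico 0 s₀, Y s₀ ≤ Y s)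
    (hx₁ : X s₀ ≤ x₀) (hx₂ : x₀ ≤ Y s₀) :
    ∃ γ : ℝ → ℝ, γ s₀ = x₀ ∧ HasDerivAt γ κ s₀ ∧
      ∀ᶠ s in nhdsWithin s₀ (Iio s₀), s ∈ Ico 0 s₀ ∧ X s ≤ γ s ∧ γ s ≤ Y s := by
  have hmem : ∀ᶠ s in nhdsWithin s₀ (Iio s₀), s ∈ Ico 0 s₀ :=
    Ico_mem_nhdsLT hs₀
  by_cases h : X s₀ = x₀
  · refine ⟨X, h, hXκ h ▸ hX, ?_⟩
    filter_upwards [hmem] with s hs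
    refine ⟨hs, le_rfl, ?_⟩
    have := hXmono s hs
    have := hYanti s hs
    linarith
  · have hlt : X s₀ < x₀ := lt_of_le_of_ne hx₁ h
    have hd : HasDerivAt (fun s => x₀ + κ * (s - s₀)) κ s₀ := by
      simpa using (((hasDerivAt_id s₀).sub_const s₀).const_mul κ).const_add x₀
    refine ⟨fun s => x₀ + κ * (s - s₀), by simp, hd, ?_⟩
    have hev : ∀ᶠ s in nhds s₀, X s < x₀ + κ * (s - s₀) :=
      hX.continuousAt.eventually_lt hd.continuousAt (by simpa using hlt)
    filter_upwards [hmem, hev.filter_mono nhdsWithin_le_nhds] with s hs hs'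
    refine ⟨hs, hs'.le, ?_⟩
    have := hYanti s hs
    nlinarith [mul_nonneg hκ (sub_nonneg.2 hs.2.le)]

lemma deriv_nonpos_of_back (f : ℝ → ℝ) (f' s₀ ε : ℝ) (hf : HasDerivAt f f' s₀)
    (hev : ∀ᶠ s in nhdsWithin s₀ (Iio s₀), ε < f s) :
    ε ≤ f s₀ ∧ (f s₀ ≤ ε → f' ≤ 0) := by
  refine ⟨?_, fun h => ?_⟩
  · exact ge_of_tendsto (hf.continuousAt.tendsto.mono_left nhdsWithin_le_nhds)
      (hev.mono fun _ h => h.le)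
  · have h1 := (hasDerivAt_iff_tendsto_slope.1 hf).mono_left
      (nhdsWithin_mono s₀ (show Iio s₀ ⊆ {s₀}ᶜ from fun x hx => ne_of_lt hx))
    refine le_of_tendsto h1 ?_
    filter_upwards [hev, self_mem_nhdsWithin] with s hs hs'
    rw [slope_def_field]
    have : s < s₀ := hs'
    exact div_nonpos_of_nonneg_of_nonpos (by linarith) (by linarith)

/-- Positivity of a cooperative system in a domain of dependence. -/
lemma cooperative_pos (R M k : ℝ → ℝ → ℝ) (c t : ℝ) (X Y : ℝ → ℝ) (hc : 0 < c)
    (hk : ∀ s x, 0 ≤ k s x)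
    (hR : ContinuousOn (Function.uncurry R) (Icc 0 t ×ˢ univ))
    (hM : ContinuousOn (Function.uncurry M) (Icc 0 t ×ˢ univ))
    (hRd : ∀ s ∈ Ioc 0 t, ∀ γ : ℝ → ℝ, HasDerivAt γ (k s (γ s)) s →
      HasDerivAt (fun τ => R τ (γ τ)) (c * M s (γ s)) s)
    (hMd : ∀ s ∈ Ioc 0 t, ∀ γ : ℝ → ℝ, HasDerivAt γ (-k s (γ s)) s →
      HasDerivAt (fun τ => M τ (γ τ)) (c * R s (γ s)) s)
    (hX : ∀ s ∈ Icc 0 t, HasDerivAt X (k s (X s)) s)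
    (hY : ∀ s ∈ Icc 0 t, HasDerivAt Y (-k s (Y s)) s)
    (h0 : ∀ x ∈ Icc (X 0) (Y 0), 0 < R 0 x ∧ 0 < M 0 x) :
    ∀ s ∈ Icc 0 t, ∀ x ∈ Icc (X s) (Y s), 0 < R s x ∧ 0 < M s x := by
  have hXmono : MonotoneOn X (Icc 0 t) := by
    refine monotoneOn_of_hasDerivWithinAt_nonneg (convex_Icc 0 t)
      (fun s hs => (hX s hs).continuousAt.continuousWithinAt)
      (fun s hs => (hX s (interior_subset hs)).hasDerivWithinAt) (fun s _ => hk _ _)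
  have hYanti : AntitoneOn Y (Icc 0 t) := by
    refine antitoneOn_of_hasDerivWithinAt_nonpos (convex_Icc 0 t)
      (fun s hs => (hY s hs).continuousAt.continuousWithinAt)
      (fun s hs => (hY s (interior_subset hs)).hasDerivWithinAt)
      (fun s _ => neg_nonpos.2 (hk _ _))
  by_contra hcon
  push Not at hcon
  obtain ⟨s₁, hs₁, x₁, hx₁, hbad⟩ := hcon
  have ht : (0:ℝ) ≤ t := hs₁.1.trans hs₁.2
  have h0t : (0:ℝ) ∈ Icc 0 t := ⟨le_rfl, ht⟩
  -- the threshold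
  obtain ⟨ε, hε, hεR⟩ : ∃ ε > 0, ∀ x ∈ Icc (X 0) (Y 0), ε < R 0 x ∧ ε < M 0 x := by
    have hne : (Icc (X 0) (Y 0)).Nonempty :=
      ⟨x₁, (hXmono h0t hs₁ hs₁.1).trans hx₁.1, hx₁.2.trans (hYanti h0t hs₁ hs₁.1)⟩
    have e0 : ContinuousOn (fun x : ℝ => ((0:ℝ), x)) (Icc (X 0) (Y 0)) := by fun_prop
    have e1 : ContinuousOn (fun x => R 0 x) (Icc (X 0) (Y 0)) :=
      hR.comp e0 (fun x _ => ⟨h0t, mem_univ _⟩)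
    have e2 : ContinuousOn (fun x => M 0 x) (Icc (X 0) (Y 0)) :=
      hM.comp e0 (fun x _ => ⟨h0t, mem_univ _⟩)
    have e3 : ContinuousOn (fun x => min (R 0 x) (M 0 x)) (Icc (X 0) (Y 0)) :=
      ContinuousOn.inf e1 e2
    obtain ⟨z, hz, hmin⟩ := isCompact_Icc.exists_isMinOn hne e3
    have hp : 0 < min (R 0 z) (M 0 z) := lt_min (h0 z hz).1 (h0 z hz).2
    refine ⟨min (R 0 z) (M 0 z) / 2, half_pos hp, fun x hx => ?_⟩
    have h1 : min (R 0 z) (M 0 z) ≤ min (R 0 x) (M 0 x) := hmin hx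
    have h2 := h1.trans (min_le_left _ _)
    have h3 := h1.trans (min_le_right _ _)
    constructor <;> linarith
  -- the compact bad set
  let box : Set (ℝ × ℝ) := Icc 0 t ×ˢ Icc (X 0) (Y 0)
  have hbox : IsCompact box := isCompact_Icc.prod isCompact_Icc
  have hsub : box ⊆ Icc 0 t ×ˢ univ := prod_mono le_rfl (subset_univ _)
  have hXc : ContinuousOn (fun p : ℝ × ℝ => X p.1) box :=
    ContinuousOn.comp (t := Icc 0 t) (fun s hs => (hX s hs).continuousAt.continuousWithinAt)
      continuousOn_fst (fun p hp => hp.1)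
  have hYc : ContinuousOn (fun p : ℝ × ℝ => Y p.1) box :=
    ContinuousOn.comp (t := Icc 0 t) (fun s hs => (hY s hs).continuousAt.continuousWithinAt)
      continuousOn_fst (fun p hp => hp.1)
  have hmc : ContinuousOn (fun p : ℝ × ℝ => max (min (R p.1 p.2) (M p.1 p.2) - ε)
      (max (X p.1 - p.2) (p.2 - Y p.1))) box := by
    have a : ContinuousOn (fun p : ℝ × ℝ => R p.1 p.2) box := hR.mono hsub
    have b : ContinuousOn (fun p : ℝ × ℝ => M p.1 p.2) box := hM.mono hsub
    exact ContinuousOn.sup (ContinuousOn.sub (ContinuousOn.inf a b) continuousOn_const)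
      (ContinuousOn.sup (hXc.sub continuousOn_snd) (continuousOn_snd.sub hYc))
  let K : Set (ℝ × ℝ) := box ∩ (fun p : ℝ × ℝ => max (min (R p.1 p.2) (M p.1 p.2) - ε)
      (max (X p.1 - p.2) (p.2 - Y p.1))) ⁻¹' Iic 0
  have hK : IsCompact K :=
    hbox.of_isClosed_subset (hmc.preimage_isClosed_of_isClosed hbox.isClosed isClosed_Iic)
      inter_subset_left
  have hKmem : ∀ s x, (s, x) ∈ K ↔ s ∈ Icc 0 t ∧ x ∈ Icc (X s) (Y s) ∧
      (R s x ≤ ε ∨ M s x ≤ ε) := by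
    intro s x
    have : (s, x) ∈ K ↔ (s ∈ Icc 0 t ∧ x ∈ Icc (X 0) (Y 0)) ∧
      max (min (R s x) (M s x) - ε) (max (X s - x) (x - Y s)) ≤ 0 := Iff.rfl
    rw [this, max_le_iff, max_le_iff, sub_nonpos, sub_nonpos, sub_nonpos, min_le_iff]
    constructor
    · rintro ⟨⟨a, -⟩, b, c, d⟩
      exact ⟨a, ⟨c, d⟩, b⟩
    · rintro ⟨a, ⟨c, d⟩, b⟩
      exact ⟨⟨a, (hXmono h0t a a.1).trans c, d.trans (hYanti h0t a a.1)⟩, b, c, d⟩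
  have hKne : K.Nonempty := by
    refine ⟨(s₁, x₁), (hKmem _ _).2 ⟨hs₁, hx₁, ?_⟩⟩
    by_contra hh
    push Not at hh
    linarith [hbad (hε.trans hh.1), hh.2]
  obtain ⟨⟨s₀, x₀⟩, hp, hmin⟩ := hK.exists_isMinOn hKne continuousOn_fst
  obtain ⟨hs₀, hx₀, hor⟩ := (hKmem _ _).1 hp
  have hs₀pos : 0 < s₀ := by
    rcases hs₀.1.lt_or_eq with h | h
    · exact h
    · subst h
      have := hεR x₀ hx₀
      rcases hor with h | h <;> linarith
  have hgood : ∀ s ∈ Ico 0 s₀, ∀ x, X s ≤ x → x ≤ Y s → ε < R s x ∧ ε < M s x := by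
    intro s hs x h1 h2
    by_contra hh
    have hmem : (s, x) ∈ K := by
      refine (hKmem _ _).2 ⟨⟨hs.1, hs.2.le.trans hs₀.2⟩, ⟨h1, h2⟩, ?_⟩
      by_contra h3
      push Not at h3
      exact hh h3
    have h4 : s₀ ≤ s := hmin hmem
    linarith [hs.2]
  have hXm : ∀ s ∈ Ico 0 s₀, X s ≤ X s₀ := fun s hs =>
    hXmono ⟨hs.1, hs.2.le.trans hs₀.2⟩ hs₀ hs.2.le
  have hYm : ∀ s ∈ Ico 0 s₀, Y s₀ ≤ Y s := fun s hs =>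
    hYanti ⟨hs.1, hs.2.le.trans hs₀.2⟩ hs₀ hs.2.le
  have hs₀' : s₀ ∈ Ioc 0 t := ⟨hs₀pos, hs₀.2⟩
  obtain ⟨γ, hγ0, hγd, hγ⟩ := exists_back_curve X Y (k s₀ x₀) s₀ x₀ _ (hk _ _) hs₀pos
    (hX s₀ hs₀) (fun h => by rw [h]) hXm hYm hx₀.1 hx₀.2
  obtain ⟨δ, hδ0, hδd, hδ⟩ := exists_back_curve (fun s => -Y s) (fun s => -X s) (k s₀ x₀) s₀
    (-x₀) _ (hk _ _) hs₀pos (hY s₀ hs₀).neg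
    (fun h => by rw [neg_neg, neg_inj.1 h])
    (fun s hs => neg_le_neg (hYm s hs)) (fun s hs => neg_le_neg (hXm s hs))
    (neg_le_neg hx₀.2) (neg_le_neg hx₀.1)
  have hδ0' : -δ s₀ = x₀ := by rw [hδ0, neg_neg]
  have A := deriv_nonpos_of_back (fun τ => R τ (γ τ)) _ s₀ ε
    (hRd s₀ hs₀' γ (by rw [hγ0]; exact hγd))
    (hγ.mono fun s hs => (hgood s hs.1 _ hs.2.1 hs.2.2).1)
  have B := deriv_nonpos_of_back (fun τ => M τ (-δ τ)) _ s₀ ε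
    (hMd s₀ hs₀' (fun τ => -δ τ) (by simp only [hδ0']; exact hδd.neg))
    (hδ.mono fun s hs =>
      (hgood s hs.1 _ (by linarith [hs.2.2]) (by linarith [hs.2.1])).2)
  simp only [hγ0] at A
  simp only [hδ0'] at B
  rcases hor with h | h
  · have := A.2 h
    have := mul_pos hc (hε.trans_le B.1)
    linarith
  · have := B.2 h
    have := mul_pos hc (hε.trans_le A.1)
    linarith

/-- Derivative of a weighted `C¹` function along a curve. -/
lemma hasDerivAt_along (T a lam : ℝ) (u : ℝ → ℝ → ℝ)
    (hu : ContDiffOn ℝ 1 (Function.uncurry u) (Ico 0 T ×ˢ (univ : Set ℝ)))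
    (s : ℝ) (hs : s ∈ Ioo 0 T) (γ : ℝ → ℝ) (κ : ℝ) (hγ : HasDerivAt γ κ s) :
    HasDerivAt (fun τ => a * (Afun lam τ * u τ (γ τ)))
      (a * Afun lam s * (lam / 2 * u s (γ s) +
        (deriv (fun τ => u τ (γ s)) s + κ * deriv (fun y => u s y) (γ s)))) s := by
  have hnhds : Ico 0 T ×ˢ (univ : Set ℝ) ∈ nhds (s, γ s) :=
    prod_mem_nhds (Ico_mem_nhds hs.1 hs.2) univ_mem
  have hf := ((hu.contDiffAt hnhds).differentiableAt (by simp)).hasFDerivAt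
  set f' := fderiv ℝ (Function.uncurry u) (s, γ s)
  have h1 : HasDerivAt (fun τ => u τ (γ s)) (f' (1, 0)) s :=
    hf.comp_hasDerivAt (f := fun τ => (τ, γ s)) s
      ((hasDerivAt_id s).prodMk (hasDerivAt_const s (γ s)))
  have h2 : HasDerivAt (fun y => u s y) (f' (0, 1)) (γ s) :=
    hf.comp_hasDerivAt (f := fun y => (s, y)) (γ s)
      ((hasDerivAt_const (γ s) s).prodMk (hasDerivAt_id (γ s)))
  have h3 : HasDerivAt (fun τ => u τ (γ τ)) (f' (1, κ)) s :=
    hf.comp_hasDerivAt (f := fun τ => (τ, γ τ)) s ((hasDerivAt_id s).prodMk hγ)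
  have h4 : f' (1, κ) = f' (1, 0) + κ * f' (0, 1) := by
    have : ((1:ℝ), κ) = (1, 0) + κ • ((0:ℝ), (1:ℝ)) := by simp
    rw [this, map_add, map_smul, smul_eq_mul]
  have hA : HasDerivAt (Afun lam) (Afun lam s * (lam / 2)) s := by
    unfold Afun
    have : HasDerivAt (fun t : ℝ => lam * t / 2) (lam / 2) s := by
      simpa using ((hasDerivAt_id s).const_mul lam).div_const 2
    exact this.exp
  rw [h1.deriv, h2.deriv, ← h4]
  have h5 : a * Afun lam s * (lam / 2 * u s (γ s) + f' (1, κ)) =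
      a * (Afun lam s * (lam / 2) * u s (γ s) + Afun lam s * f' (1, κ)) := by ring
  rw [h5]
  exact (hA.mul h3).const_mul a

lemma weighted_continuousOn (T t a lam : ℝ) (ht : t < T) (u : ℝ → ℝ → ℝ)
    (hu : ContDiffOn ℝ 1 (Function.uncurry u) (Ico 0 T ×ˢ (univ : Set ℝ))) :
    ContinuousOn (Function.uncurry fun s x => a * (Afun lam s * u s x)) (Icc 0 t ×ˢ univ) := by
  have h := hu.continuousOn.mono
    (prod_mono (Icc_subset_Ico_right ht) (le_refl (univ : Set ℝ)))
  have hA : Continuous (fun p : ℝ × ℝ => Afun lam p.1) := by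
    unfold Afun; fun_prop
  exact continuousOn_const.mul (hA.continuousOn.mul h)

/-- under the additional sign condition on `r₀(+∞)`, the sign of `η`
is preserved along the forward characteristic: `η(t,x₁(t,α))·η(0,α) > 0`,
where `η(0,α) = 2r₀(α)`. -/
theorem eta_sign_preserved_along_forward_characteristic
    (lam T : ℝ) (hlam : 0 < lam)
    (r l : ℝ → ℝ → ℝ) (r₀ : ℝ → ℝ) (rinf : ℝ)
    (hreg_r : ContDiffOn ℝ 1 (Function.uncurry r) (Set.Ico 0 T ×ˢ (Set.univ : Set ℝ)))
    (hreg_l : ContDiffOn ℝ 1 (Function.uncurry l) (Set.Ico 0 T ×ˢ (Set.univ : Set ℝ)))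
    (hsys_r : ∀ t ∈ Set.Ico (0:ℝ) T, ∀ x : ℝ,
      deriv (fun s => r s x) t + kfun (etafun r l t x) * deriv (fun y => r t y) x
        = -(lam/2) * (r t x + l t x))
    (hsys_l : ∀ t ∈ Set.Ico (0:ℝ) T, ∀ x : ℝ,
      deriv (fun s => l s x) t - kfun (etafun r l t x) * deriv (fun y => l t y) x
        = -(lam/2) * (r t x + l t x))
    (hr0 : ∀ x : ℝ, r 0 x = r₀ x)
    (hl0 : ∀ x : ℝ, l 0 x = -r₀ x)
    (hr₀reg : ContDiff ℝ 1 r₀)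
    (hr₀bdd : ∃ C : ℝ, ∀ x : ℝ, |r₀ x| ≤ C)
    (hrinf : Filter.Tendsto r₀ Filter.atTop (nhds rinf))
    (hetabdd : ∀ t ∈ Set.Ico (0:ℝ) T, ∀ x y : ℝ,
      |r t x - l t y| ≤ 2 * ⨆ z : ℝ, |r₀ z|)
    -- the forward characteristic starting from α and the backward characteristic flow
    (α : ℝ) (x₁ : ℝ → ℝ) (x₂ : ℝ → ℝ → ℝ)
    (hx₁0 : x₁ 0 = α)
    (hx₁ : ∀ t ∈ Set.Ico (0:ℝ) T,
      HasDerivAt x₁ (kfun (etafun r l t (x₁ t))) t)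
    (hflowreg₂ : ContDiffOn ℝ 1 (Function.uncurry x₂) (Set.Ico 0 T ×ˢ (Set.univ : Set ℝ)))
    (hx₂0 : ∀ b : ℝ, x₂ 0 b = b)
    (hx₂ : ∀ b : ℝ, ∀ t ∈ Set.Ico (0:ℝ) T,
      HasDerivAt (fun s => x₂ s b) (-(kfun (etafun r l t (x₂ t b)))) t)
    -- the correspondence map t ↦ β(t,α)
    (bmap : ℝ → ℝ)
    (hbmapreg : ContDiffOn ℝ 1 bmap (Set.Ico 0 T))
    (hbmap : ∀ t ∈ Set.Ico (0:ℝ) T, x₁ t = x₂ t (bmap t))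
    -- conditions (69) on the initial profile at α
    (hcond₁ : deriv r₀ α * (r₀ α + rinf) < 0)
    (hcond₂ : ∀ x : ℝ, α ≤ x → deriv r₀ x * r₀ α < 0)
    -- the additional sign condition
    (hcond₃ : 0 < r₀ α * rinf ∨ rinf = 0) :
    ∀ t ∈ Set.Ico (0:ℝ) T,
      etafun r l t (x₁ t) * (2 * r₀ α) > 0 := by
  intro t ht
  have hr₀pos : ∀ x, α ≤ x → 0 < r₀ α * r₀ x := by
    have hanti : StrictAntiOn (fun x => r₀ α * r₀ x) (Ici α) := by
      refine strictAntiOn_of_deriv_neg (convex_Ici α)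
        (continuous_const.mul hr₀reg.continuous).continuousOn (fun x hx => ?_)
      have hd : DifferentiableAt ℝ r₀ x := (hr₀reg.differentiable (by simp)) x
      rw [deriv_const_mul _ hd, mul_comm]
      exact hcond₂ x (interior_subset hx)
    have hlim : Tendsto (fun x => r₀ α * r₀ x) atTop (nhds (r₀ α * rinf)) :=
      hrinf.const_mul _
    have hnn : 0 ≤ r₀ α * rinf := by
      rcases hcond₃ with h | h
      · exact h.le
      · simp [h]
    intro x hx
    have h1 : r₀ α * r₀ (x + 1) < r₀ α * r₀ x :=
      hanti hx (by simp only [mem_Ici]; linarith) (by linarith)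
    have h2 : r₀ α * rinf ≤ r₀ α * r₀ (x + 1) := by
      refine le_of_tendsto hlim ?_
      filter_upwards [eventually_ge_atTop (x + 1)] with y hy
      exact hanti.antitoneOn (by simp only [mem_Ici]; linarith)
        (by simp only [mem_Ici]; linarith) hy
    linarith
  have hlam2 : 0 < lam / 2 := by linarith
  have key := cooperative_pos (fun s x => r₀ α * (Afun lam s * r s x))
    (fun s x => -r₀ α * (Afun lam s * l s x)) (fun s x => kfun (etafun r l s x))
    (lam / 2) t x₁ (fun s => x₂ s (bmap t)) hlam2 (fun s x => Real.sqrt_nonneg _)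
    (weighted_continuousOn T t _ lam ht.2 r hreg_r)
    (weighted_continuousOn T t _ lam ht.2 l hreg_l)
    (fun s hs γ hγ => by
      have hs' : s ∈ Ico 0 T := ⟨hs.1.le, hs.2.trans_lt ht.2⟩
      have h := hasDerivAt_along T (r₀ α) lam r hreg_r s ⟨hs.1, hs'.2⟩ γ _ hγ
      rw [hsys_r s hs'] at h
      convert h using 1
      ring)
    (fun s hs γ hγ => by
      have hs' : s ∈ Ico 0 T := ⟨hs.1.le, hs.2.trans_lt ht.2⟩
      have h := hasDerivAt_along T (-r₀ α) lam l hreg_l s ⟨hs.1, hs'.2⟩ γ _ hγ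
      rw [neg_mul (kfun _), ← sub_eq_add_neg, hsys_l s hs'] at h
      convert h using 1
      ring)
    (fun s hs => hx₁ s ⟨hs.1, hs.2.trans_lt ht.2⟩)
    (fun s hs => hx₂ _ s ⟨hs.1, hs.2.trans_lt ht.2⟩)
    (fun x hx => by
      rw [hx₁0] at hx
      have := hr₀pos x hx.1
      simp only [hr0, hl0]
      have hA : Afun lam 0 = 1 := by simp [Afun]
      rw [hA]
      constructor <;> linarith)
    t ⟨ht.1, le_rfl⟩ (x₁ t) ⟨le_rfl, (hbmap t ht).le⟩
  have hA : 0 < Afun lam t := Real.exp_pos _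
  have hsum : 0 < Afun lam t * (etafun r l t (x₁ t) * (2 * r₀ α)) := by
    unfold etafun
    nlinarith [key.1, key.2]
  exact pos_of_mul_pos_right hsum hA.le
end
end
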